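/- arXiv:1604.08841 — 3 statements merged into one kernel-verified Lean document; each statement's English description precedes it below -/
import Mathlib

section
/- Let δ, ρ > 0 and 0 < η < 1 satisfy ρη > δ. Let A ⊆ ℝ² and let S ⊆ ℝ² be a vertical segment of length at most 2δ. Assume that for every x ∈ A ∩ S, reach(A, x) ≥ ρ and |⟨v, e₂⟩| ≥ η|v| whenever v ∈ Nor(A, x). Then A ∩ S is connected. -/
open Metric Set Filter
open scoped ENNReal RealInnerProductSpace Topology NNReal

noncomputable section

variable {E : Type*} [NormedAddCommGroup E] [InnerProductSpace ℝ E]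

/-- `x` has a unique nearest point in `A`. -/
def UnpPt (A : Set E) (x : E) : Prop :=
  ∃! a, a ∈ A ∧ dist x a = Metric.infDist x A

/-- The reach of `A` at a point `a` (Federer). -/
def locReach (A : Set E) (a : E) : ℝ≥0∞ :=
  ⨆ (r : ℝ≥0) (_ : ∀ x : E, dist x a < (r : ℝ) → UnpPt A x), (r : ℝ≥0∞)

/-- The (global) reach of `A`. -/
def setReach (A : Set E) : ℝ≥0∞ := ⨅ a ∈ A, locReach A a

/-- The tangent cone of `A` at `a` in the sense of Federer. -/
def Tan (A : Set E) (a : E) : Set E :=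
  {u | u = 0 ∨ ∃ (x : ℕ → E) (r : ℕ → ℝ),
    (∀ i, x i ∈ A ∧ x i ≠ a ∧ 0 < r i) ∧
    Tendsto x atTop (nhds a) ∧
    Tendsto (fun i => r i • (x i - a)) atTop (nhds u)}

/-- The normal cone of `A` at `a`: the dual cone of the tangent cone. -/
def Nor (A : Set E) (a : E) : Set E :=
  {u | ∀ v ∈ Tan A a, ⟪u, v⟫ ≤ 0}

/-!
If the closed set `A ∩ [a, b]` were not the whole segment, it would contain a point `p ≠ b` with
`p + t • (b - p) ∉ A` for all small `t > 0`. Each such point has a nearest point `q t ∈ A`, with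
`q t → p`, and the unit vector from `q t` to it is a proximal normal to `A` at `q t`. Because
nearest points are unique near `p`, its radius extends to `ρ - dist (q t) p` (Federer): maximizing
the distance to `A` over a small ball centred on the normal ray shows that the ray can be prolonged.
In the limit `t → 0` there is a unit `v ∈ Nor A p` with `⟪v, b - p⟫ ≥ 0` and
`2 * ρ * ⟪v, b - p⟫ ≤ ‖b - p‖ ^ 2`, which is impossible when `η * ‖b - p‖ ≤ |⟪v, b - p⟫|` and
`‖b - p‖ ≤ 2 * δ < 2 * ρ * η`.
-/

section MetricProjection

variable {F : Type*} [NormedAddCommGroup F] {A S : Set F} {a b c p x z : F}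

/-- `a` is a nearest point of `A` to `z`: the values of the metric projection onto `A`, as a
relation. Thus `UnpPt A z` says that `z` has exactly one nearest point. -/
def IsNearestPt (A : Set F) (z a : F) : Prop :=
  a ∈ A ∧ dist z a = infDist z A

namespace IsNearestPt

lemma self (hp : p ∈ A) : IsNearestPt A p p :=
  ⟨hp, by rw [dist_self, infDist_zero_of_mem hp]⟩

lemma closure (h : IsNearestPt A z a) : IsNearestPt (closure A) z a :=
  ⟨subset_closure h.1, by rw [infDist_closure, h.2]⟩

lemma eq_of_unpPt (hz : UnpPt A z) (ha : IsNearestPt A z a) (hb : IsNearestPt A z b) : a = b :=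
  hz.unique ha hb

end IsNearestPt

lemma UnpPt.mem_of_mem_closure (h : UnpPt A z) (hz : z ∈ closure A) : z ∈ A := by
  obtain ⟨a, ⟨haA, had⟩, -⟩ := h
  have hza : z = a := by
    rw [← dist_eq_zero, had, ← infDist_closure, infDist_zero_of_mem hz]
  exact hza ▸ haA

lemma unpPt_of_mem_ball_of_le_locReach {ρ : ℝ} (hρ : ENNReal.ofReal ρ ≤ locReach A a)
    (hx : x ∈ ball a ρ) : UnpPt A x := by
  have hlt : edist x a < locReach A a := (edist_lt_ofReal.2 hx).trans_le hρ
  simp only [locReach, lt_iSup_iff] at hlt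
  obtain ⟨r, hr, hxr⟩ := hlt
  exact hr x (edist_lt_coe.1 hxr)

lemma isClosed_inter_of_le_locReach {ρ : ℝ} (hρ : 0 < ρ) (hS : IsClosed S)
    (hreach : ∀ x ∈ A ∩ S, ENNReal.ofReal ρ ≤ locReach A x) : IsClosed (A ∩ S) := by
  refine isClosed_of_closure_subset fun z hz => ⟨?_, hS.closure_subset_iff.2 inter_subset_right hz⟩
  obtain ⟨x, hx, hzx⟩ := Metric.mem_closure_iff.1 hz ρ hρ
  exact (unpPt_of_mem_ball_of_le_locReach (hreach x hx) hzx).mem_of_mem_closure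
    (closure_mono inter_subset_left hz)

variable [NormedSpace ℝ F]

lemma tendsto_add_smul_nhdsGT_zero (z w : F) :
    Tendsto (fun t : ℝ => z + t • w) (𝓝[>] 0) (𝓝 z) := by
  have hcont : Continuous fun t : ℝ => z + t • w := by fun_prop
  simpa using (hcont.tendsto 0).mono_left nhdsWithin_le_nhds

variable [StrictConvexSpace ℝ F]

lemma IsNearestPt.eq_of_lineMap {θ : ℝ} (hc : IsNearestPt A z c) (hθ₀ : 0 < θ) (hθ₁ : θ ≤ 1)
    (ha : IsNearestPt A (AffineMap.lineMap z c θ) a) : a = c := by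
  set w := AffineMap.lineMap z c θ with hw
  have hzw : dist z w = θ * dist z c := by
    rw [hw, dist_left_lineMap, Real.norm_of_nonneg hθ₀.le]
  have hwc : dist w c = (1 - θ) * dist z c := by
    rw [hw, dist_lineMap_right, Real.norm_of_nonneg (sub_nonneg.2 hθ₁)]
  have hza : dist z c ≤ dist z a := hc.2 ▸ infDist_le_dist_of_mem ha.1
  have hwa : dist w a ≤ dist w c := ha.2 ▸ infDist_le_dist_of_mem hc.1
  have htri : dist z a ≤ dist z w + dist w a := dist_triangle z w a
  have heq : dist z a = dist z c := by linarith
  have hline : w = AffineMap.lineMap z a θ :=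
    eq_lineMap_of_dist_eq_mul_of_dist_eq_mul (by rw [hzw, heq]) (by rw [heq]; linarith)
  simpa [hw, AffineMap.lineMap_apply, hθ₀.ne'] using hline.symm

-- Moving `z` towards `c` makes `c` the only nearest point of `closure A`, hence that of `A`.
lemma mem_of_isNearestPt_closure (hz : ∀ᶠ w in 𝓝 z, UnpPt A w)
    (hc : IsNearestPt (closure A) z c) : c ∈ A := by
  have hlim : Tendsto (fun θ : ℝ => AffineMap.lineMap z c θ) (𝓝[>] 0) (𝓝 z) := by
    simpa only [AffineMap.lineMap_apply_module', add_comm] using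
      tendsto_add_smul_nhdsGT_zero z (c - z)
  obtain ⟨θ, ⟨a, ha, -⟩, hθ₀, hθ₁⟩ :=
    ((hlim.eventually hz).and (Ioc_mem_nhdsGT one_pos)).exists
  have ha : IsNearestPt A (AffineMap.lineMap z c θ) a := ha
  exact hc.eq_of_lineMap hθ₀ hθ₁ ha.closure ▸ ha.1

lemma IsNearestPt.tendsto [ProperSpace F] {ι : Type*} {l : Filter ι} {y b : ι → F}
    (hz : ∀ᶠ w in 𝓝 z, UnpPt A w) (ha : IsNearestPt A z a) (hy : Tendsto y l (𝓝 z))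
    (hb : ∀ᶠ i in l, IsNearestPt A (y i) (b i)) : Tendsto b l (𝓝 a) := by
  have hdist : Tendsto (fun i => dist z (b i)) l (𝓝 (infDist z A)) := by
    have hfoot : Tendsto (fun i => dist (y i) (b i)) l (𝓝 (infDist z A)) :=
      (((continuous_infDist_pt A).tendsto z).comp hy).congr' (hb.mono fun i hi => hi.2.symm)
    exact hfoot.congr_dist <| squeeze_zero (fun _ => dist_nonneg)
      (fun i => dist_dist_dist_le_left (y i) z (b i)) (tendsto_iff_dist_tendsto_zero.1 hy)
  have hbdd : ∀ᶠ i in l, b i ∈ closedBall z (infDist z A + 1) := by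
    filter_upwards [hdist.eventually_le_const (lt_add_one _)] with i hi
    rwa [mem_closedBall']
  refine (isCompact_closedBall z _).tendsto_nhds_of_unique_mapClusterPt hbdd fun c _ hc => ?_
  obtain ⟨U, hU, hbc⟩ := mapClusterPt_iff_ultrafilter.1 hc
  have hcA : c ∈ _root_.closure A := mem_closure_of_tendsto hbc (hU (hb.mono fun i hi => hi.1))
  have hcd : dist z c = infDist z A :=
    tendsto_nhds_unique (tendsto_const_nhds.dist hbc) (hdist.mono_left hU)
  have hcA' : c ∈ A := mem_of_isNearestPt_closure hz ⟨hcA, by rw [infDist_closure, hcd]⟩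
  exact eq_of_unpPt hz.self_of_nhds ⟨hcA', hcd⟩ ha

lemma exists_tendsto_isNearestPt_add_smul [ProperSpace F] (hz : ∀ᶠ w in 𝓝 z, UnpPt A w)
    (ha : IsNearestPt A z a) (w : F) :
    ∃ b : ℝ → F, Tendsto b (𝓝[>] 0) (𝓝 a) ∧
      ∀ᶠ t in 𝓝[>] (0 : ℝ), IsNearestPt A (z + t • w) (b t) := by
  have hlim := tendsto_add_smul_nhdsGT_zero z w
  obtain ⟨b, hb⟩ := ((hlim.eventually hz).mono fun t ht => ht.exists).choice
  exact ⟨b, ha.tendsto hz hlim hb, hb⟩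

end MetricProjection

section PositiveReach

variable {A S : Set E} {a b c e p v w x y z : E}

lemma eventually_infDist_lt_infDist_add_smul [ProperSpace E] (hz : ∀ᶠ w in 𝓝 z, UnpPt A w)
    (ha : IsNearestPt A z a) (hw : 0 < ⟪w, z - a⟫) :
    ∀ᶠ t in 𝓝[>] (0 : ℝ), infDist z A < infDist (z + t • w) A := by
  obtain ⟨b, hba, hb⟩ := exists_tendsto_isNearestPt_add_smul hz ha w
  have hinner : Tendsto (fun t => ⟪w, z - b t⟫) (𝓝[>] 0) (𝓝 ⟪w, z - a⟫) :=
    tendsto_const_nhds.inner (hba.const_sub z)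
  filter_upwards [hb, hinner.eventually_const_lt hw, self_mem_nhdsWithin] with t hbt hpos ht
  have ht : 0 < t := ht
  refine lt_of_pow_lt_pow_left₀ 2 infDist_nonneg ?_
  calc infDist z A ^ 2
      ≤ ‖z - b t‖ ^ 2 := by
        rw [← dist_eq_norm]
        gcongr
        exacts [infDist_nonneg, infDist_le_dist_of_mem hbt.1]
    _ < ‖z - b t‖ ^ 2 + 2 * (t * ⟪w, z - b t⟫) + ‖t • w‖ ^ 2 := by
        nlinarith [mul_pos ht hpos, sq_nonneg ‖t • w‖]
    _ = ‖(z - b t) + t • w‖ ^ 2 := by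
        rw [norm_add_sq_real, inner_smul_right, real_inner_comm]
    _ = infDist (z + t • w) A ^ 2 := by
        rw [← hbt.2, dist_eq_norm, add_sub_right_comm]

lemma inner_sub_nonpos_of_isMaxOn_infDist [ProperSpace E] {C : Set E} (hC : Convex ℝ C)
    (hzC : z ∈ C) (hmax : IsMaxOn (infDist · A) C z) (hz : ∀ᶠ w in 𝓝 z, UnpPt A w)
    (ha : IsNearestPt A z a) (hw : w ∈ C) : ⟪w - z, z - a⟫ ≤ 0 := by
  by_contra! hpos
  obtain ⟨t, hlt, ht₀, ht₁⟩ := ((eventually_infDist_lt_infDist_add_smul hz ha hpos).and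
    (Ioc_mem_nhdsGT one_pos)).exists
  exact (hmax (hC.add_smul_sub_mem hzC hw ⟨ht₀.le, ht₁⟩)).not_gt hlt

lemma inner_normalize_self (x : E) : ⟪NormedSpace.normalize x, x⟫ = ‖x‖ := by
  rcases eq_or_ne x 0 with rfl | hx
  · simp
  · rw [NormedSpace.normalize, real_inner_smul_left, real_inner_self_eq_norm_mul_norm,
      inv_mul_cancel_left₀ (norm_ne_zero_iff.2 hx)]

-- A maximizer `z` of the distance to `A` over the ball is as far from `y` as possible, in the
-- direction away from its own nearest point `c`.
lemma exists_isNearestPt_dist_eq_add [ProperSpace E] {s : ℝ} (hs : 0 < s) (hsy : s ≤ infDist y A)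
    (hU : ∀ z ∈ closedBall y s, ∀ᶠ w in 𝓝 z, UnpPt A w) :
    ∃ z c, dist z y ≤ s ∧ IsNearestPt A z c ∧ IsNearestPt A y c ∧ dist z c = dist y c + s := by
  obtain ⟨z, hz, hmax⟩ := (isCompact_closedBall y s).exists_isMaxOn
    ⟨y, mem_closedBall_self hs.le⟩ (continuous_infDist_pt A).continuousOn
  obtain ⟨c, hc : IsNearestPt A z c, -⟩ := (hU z hz).self_of_nhds
  have hyz : infDist y A ≤ dist z c := hc.2 ▸ hmax (mem_closedBall_self hs.le)
  have hzy : infDist z A ≤ infDist y A + s :=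
    infDist_le_infDist_add_dist.trans (by gcongr; exact hz)
  have hyc : infDist y A ≤ dist y c := infDist_le_dist_of_mem hc.1
  have hzc : z - c ≠ 0 := sub_ne_zero.2 (dist_pos.1 (by linarith))
  have hinner : s * ‖z - c‖ ≤ ⟪z - y, z - c⟫ := by
    have hmem : y + s • NormedSpace.normalize (z - c) ∈ closedBall y s := by
      rw [mem_closedBall, dist_self_add_left, norm_smul,
        NormedSpace.norm_normalize_eq_one_iff.2 hzc, mul_one, Real.norm_of_nonneg hs.le]
    have hfirst := inner_sub_nonpos_of_isMaxOn_infDist (convex_closedBall y s) hz hmax (hU z hz)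
      hc hmem
    rw [add_sub_right_comm, inner_add_left, real_inner_smul_left, inner_normalize_self,
      ← neg_sub z y, inner_neg_left] at hfirst
    linarith
  have hle : dist y c ≤ dist z c - s := by
    refine le_of_sq_le_sq ?_ (by linarith)
    have hnorm : ‖z - y‖ ≤ s := by rwa [← dist_eq_norm]
    rw [dist_eq_norm y, dist_eq_norm z, show y - c = (z - c) - (z - y) by abel, norm_sub_sq_real,
      real_inner_comm]
    nlinarith [norm_nonneg (z - y)]
  exact ⟨z, c, hz, hc, ⟨hc.1, by linarith [hc.2]⟩, by linarith [hc.2]⟩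

lemma eventually_infDist_add_smul_eq [ProperSpace E] {τ : ℝ} (hτ : 0 < τ) (hv : ‖v‖ = 1)
    (hx : x ∈ A) (hU : ∀ᶠ w in 𝓝 (x + τ • v), UnpPt A w) (h : infDist (x + τ • v) A = τ) :
    ∀ᶠ t in 𝓝[>] τ, infDist (x + t • v) A = t := by
  set y := x + τ • v with hy
  obtain ⟨ε, hε, hball⟩ := Metric.eventually_nhds_iff_ball.1 hU.eventually_nhds
  filter_upwards [Ioo_mem_nhdsGT (show τ < τ + min ε τ by simp [hε, hτ])] with t ⟨hτt, htε⟩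
  have htε' : t - τ < ε := by linarith [min_le_left ε τ]
  have htτ : t - τ < τ := by linarith [min_le_right ε τ]
  obtain ⟨z, c, hzy, hzc, hyc, hadd⟩ := exists_isNearestPt_dist_eq_add (sub_pos.2 hτt)
    (by rw [h]; exact htτ.le) fun z hz => hball z (closedBall_subset_ball htε' hz)
  have hyx : dist y x = τ := by
    rw [hy, dist_self_add_left, norm_smul, hv, mul_one, Real.norm_of_nonneg hτ.le]
  obtain rfl : c = x := hyc.eq_of_unpPt hU.self_of_nhds ⟨hx, by rw [hyx, h]⟩
  have hcz : dist c z = t := by rw [dist_comm, hadd, hyx]; ring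
  have hyz : dist y z = t - τ := by
    refine le_antisymm (by rwa [dist_comm]) ?_
    linarith [dist_triangle c y z, dist_comm c y]
  have ht₀ : t ≠ 0 := by linarith
  have hline : y = AffineMap.lineMap c z (τ / t) :=
    eq_lineMap_of_dist_eq_mul_of_dist_eq_mul (by rw [dist_comm, hyx, hcz]; field_simp)
      (by rw [hyz, hcz]; field_simp)
  have hsmul : τ • v = (τ / t) • (z - c) := by
    simpa [hy, AffineMap.lineMap_apply_module', add_comm c] using hline
  have hz : c + t • v = z := by
    rw [← div_mul_cancel₀ t hτ.ne', mul_smul, hsmul, smul_smul, div_mul_div_cancel₀ hτ.ne',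
      div_self ht₀, one_smul, add_sub_cancel]
  rw [hz, ← hzc.2, dist_comm, hcz]

lemma infDist_add_smul_eq_of_le [ProperSpace E] {d R r : ℝ} (hU : ∀ y ∈ ball x r, UnpPt A y)
    (hx : x ∈ A) (hv : ‖v‖ = 1) (hd : 0 < d) (h : infDist (x + d • v) A = d) (hdR : d ≤ R)
    (hRr : R < r) : infDist (x + R • v) A = R := by
  have hclosed : IsClosed {t : ℝ | infDist (x + t • v) A = t} :=
    isClosed_eq ((continuous_infDist_pt A).comp (by fun_prop)) continuous_id
  refine (hclosed.inter isClosed_Icc).Icc_subset_of_forall_mem_nhdsWithin h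
    (fun τ ⟨hτ, hdτ, hτR⟩ => ?_) ⟨hdR, le_rfl⟩
  have hτ₀ : 0 < τ := hd.trans_le hdτ
  have hmem : x + τ • v ∈ ball x r := by
    rw [mem_ball, dist_self_add_left, norm_smul, hv, mul_one, Real.norm_of_nonneg hτ₀.le]
    linarith
  exact eventually_infDist_add_smul_eq hτ₀ hv hx
    ((isOpen_ball.eventually_mem hmem).mono hU) hτ

/-- `v` is a proximal normal to `A` at `x` of radius `r`: for a unit vector `v` and `0 ≤ r`, the
open ball of radius `r` centred at `x + r • v` does not meet `A`. The condition is written in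
Federer's quadratic form, which passes to limits in `r`, `x` and `v`. -/
def IsProximalNormal (A : Set E) (r : ℝ) (x v : E) : Prop :=
  ∀ b ∈ A, 2 * r * ⟪b - x, v⟫ ≤ ‖b - x‖ ^ 2 * ‖v‖

namespace IsProximalNormal

lemma of_le_infDist {r : ℝ} (hr : 0 ≤ r) (hv : ‖v‖ = 1) (h : r ≤ infDist (x + r • v) A) :
    IsProximalNormal A r x v := by
  intro b hb
  have hle : r ≤ ‖(b - x) - r • v‖ := by
    rw [sub_sub, ← dist_eq_norm, dist_comm]
    exact h.trans (infDist_le_dist_of_mem hb)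
  have hsq : r ^ 2 ≤ ‖(b - x) - r • v‖ ^ 2 := by gcongr
  rw [norm_sub_sq_real, inner_smul_right, norm_smul, hv, Real.norm_of_nonneg hr] at hsq
  rw [hv]
  linarith

lemma of_tendsto {ι : Type*} {l : Filter ι} [l.NeBot] {R : ι → ℝ} {y u : ι → E} {r : ℝ}
    (hR : Tendsto R l (𝓝 r)) (hy : Tendsto y l (𝓝 x)) (hu : Tendsto u l (𝓝 v))
    (h : ∀ᶠ i in l, IsProximalNormal A (R i) (y i) (u i)) : IsProximalNormal A r x v := by
  intro b hb
  have hby : Tendsto (fun i => b - y i) l (𝓝 (b - x)) := hy.const_sub b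
  exact le_of_tendsto_of_tendsto ((hR.const_mul 2).mul (hby.inner hu))
    ((hby.norm.pow 2).mul hu.norm) (h.mono fun i hi => hi b hb)

lemma mem_Nor {r : ℝ} (hr : 0 < r) (h : IsProximalNormal A r x v) : v ∈ Nor A x := by
  rintro u (rfl | ⟨y, s, hys, hyx, hu⟩)
  · rw [inner_zero_right]
  have hlhs : Tendsto (fun i => 2 * r * ⟪s i • (y i - x), v⟫) atTop (𝓝 (2 * r * ⟪u, v⟫)) :=
    (hu.inner tendsto_const_nhds).const_mul _
  have hrhs : Tendsto (fun i => ‖s i • (y i - x)‖ * ‖y i - x‖ * ‖v‖) atTop (𝓝 0) := by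
    simpa using (hu.norm.mul (hyx.sub_const x).norm).mul_const ‖v‖
  have hle : 2 * r * ⟪u, v⟫ ≤ 0 := le_of_tendsto_of_tendsto' hlhs hrhs fun i => by
    obtain ⟨hyA, -, hs⟩ := hys i
    rw [real_inner_smul_left, norm_smul, Real.norm_of_nonneg hs.le]
    linarith [mul_le_mul_of_nonneg_left (h _ hyA) hs.le]
  rw [real_inner_comm]
  exact nonpos_of_mul_nonpos_right hle (by positivity)

end IsProximalNormal

lemma IsNearestPt.isProximalNormal [ProperSpace E] {r : ℝ} (hU : ∀ y ∈ ball x r, UnpPt A y)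
    (h : IsNearestPt A z x) (hzx : z ≠ x) (hzr : dist z x < r) :
    IsProximalNormal A r x (NormedSpace.normalize (z - x)) := by
  have hv : ‖NormedSpace.normalize (z - x)‖ = 1 :=
    NormedSpace.norm_normalize_eq_one_iff.2 (sub_ne_zero.2 hzx)
  have hd : infDist (x + dist z x • NormedSpace.normalize (z - x)) A = dist z x := by
    rw [dist_eq_norm, NormedSpace.norm_smul_normalize, add_sub_cancel, ← dist_eq_norm, h.2]
  refine .of_tendsto (l := 𝓝[<] r) (tendsto_id.mono_left nhdsWithin_le_nhds) tendsto_const_nhds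
    tendsto_const_nhds ?_
  filter_upwards [Ioo_mem_nhdsLT hzr] with R ⟨hzR, hRr⟩
  exact .of_le_infDist (dist_nonneg.trans hzR.le) hv
    (infDist_add_smul_eq_of_le hU h.1 hv (dist_pos.2 hzx) hd hzR.le hRr).ge

lemma IsNearestPt.neg_le_mul_inner_normalize {R t : ℝ} (hx : IsNearestPt A (p + t • e) x)
    (hp : p ∈ A) (ht : 0 < t) (hR : 0 ≤ R) (hne : p + t • e ≠ x)
    (hprox : IsProximalNormal A R x (NormedSpace.normalize (p + t • e - x))) :
    -(2 * t * ‖e‖ ^ 2) ≤ R * ⟪NormedSpace.normalize (p + t • e - x), e⟫ := by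
  set u := NormedSpace.normalize (p + t • e - x) with hu
  have hu₁ : ‖u‖ = 1 := NormedSpace.norm_normalize_eq_one_iff.2 (sub_ne_zero.2 hne)
  have hpx : ‖p - x‖ ≤ 2 * t * ‖e‖ := by
    have hte : dist (p + t • e) p = t * ‖e‖ := by
      rw [dist_self_add_left, norm_smul, Real.norm_of_nonneg ht.le]
    have hle : dist (p + t • e) x ≤ t * ‖e‖ := hte ▸ hx.2 ▸ infDist_le_dist_of_mem hp
    rw [← dist_eq_norm]
    linarith [dist_triangle_left p x (p + t • e)]
  have hlower : -(t * ⟪u, e⟫) ≤ ⟪p - x, u⟫ := by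
    have hnonneg : 0 ≤ ⟪u, p + t • e - x⟫ := by
      rw [hu, inner_normalize_self]
      exact norm_nonneg _
    rw [add_sub_right_comm, inner_add_right, real_inner_smul_right, real_inner_comm] at hnonneg
    linarith
  have hupper : 2 * R * ⟪p - x, u⟫ ≤ (2 * t * ‖e‖) ^ 2 := by
    have hineq := hprox p hp
    rw [hu₁, mul_one] at hineq
    exact hineq.trans (by gcongr)
  refine le_of_mul_le_mul_left ?_ ht
  linarith [mul_le_mul_of_nonneg_left hlower hR]

lemma eventually_isProximalNormal_normalize [ProperSpace E] {ι : Type*} {l : Filter ι}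
    {y q : ι → E} {r : ℝ} (hU : ∀ z ∈ ball p r, UnpPt A z) (hr : 0 < r) (hy : Tendsto y l (𝓝 p))
    (hq : Tendsto q l (𝓝 p)) (hyq : ∀ᶠ i in l, IsNearestPt A (y i) (q i) ∧ y i ≠ q i) :
    ∀ᶠ i in l, IsProximalNormal A (r - dist (q i) p) (q i)
      (NormedSpace.normalize (y i - q i)) := by
  have hdist : Tendsto (fun i => dist (y i) (q i) + dist (q i) p) l (𝓝 0) := by
    simpa using (hy.dist hq).add (hq.dist (tendsto_const_nhds (x := p)))
  filter_upwards [hyq, hdist.eventually_lt_const hr] with i ⟨hnear, hne⟩ hlt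
  refine hnear.isProximalNormal (fun z hz => hU z ?_) hne (by linarith)
  exact ball_subset_ball' (by linarith) hz

lemma exists_isProximalNormal_inner_nonneg [ProperSpace E] {r : ℝ} (hr : 0 < r) (hp : p ∈ A)
    (hU : ∀ y ∈ ball p r, UnpPt A y) (hgap : ∀ᶠ t in 𝓝[>] (0 : ℝ), p + t • e ∉ A) :
    ∃ v, ‖v‖ = 1 ∧ 0 ≤ ⟪v, e⟫ ∧ IsProximalNormal A r p v := by
  have hUp : ∀ᶠ w in 𝓝 p, UnpPt A w := (isOpen_ball.eventually_mem (mem_ball_self hr)).mono hU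
  obtain ⟨q, hqp, hq⟩ := exists_tendsto_isNearestPt_add_smul hUp (.self hp) e
  have hne : ∀ᶠ t in 𝓝[>] (0 : ℝ), p + t • e ≠ q t := by
    filter_upwards [hgap, hq] with t ht hqt heq using ht (heq ▸ hqt.1)
  have hprox := eventually_isProximalNormal_normalize hU hr (tendsto_add_smul_nhdsGT_zero p e) hqp
    (hq.and hne)
  have hR : Tendsto (fun t => r - dist (q t) p) (𝓝[>] 0) (𝓝 r) := by
    simpa using (hqp.dist (tendsto_const_nhds (x := p))).const_sub r
  set u := fun t : ℝ => NormedSpace.normalize (p + t • e - q t)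
  have hu : ∀ᶠ t in 𝓝[>] (0 : ℝ), u t ∈ sphere 0 1 := by
    filter_upwards [hne] with t ht
    exact mem_sphere_zero_iff_norm.2
      (NormedSpace.norm_normalize_eq_one_iff.2 (sub_ne_zero.2 ht))
  obtain ⟨v, hv, hcluster⟩ :=
    (isCompact_sphere (0 : E) 1).exists_mapClusterPt_of_frequently hu.frequently
  obtain ⟨U, hUle, huv⟩ := mapClusterPt_iff_ultrafilter.1 hcluster
  refine ⟨v, mem_sphere_zero_iff_norm.1 hv, ?_, .of_tendsto (hR.mono_left hUle)
    (hqp.mono_left hUle) huv (hUle hprox)⟩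
  have hbound : ∀ᶠ t in 𝓝[>] (0 : ℝ),
      -(2 * t * ‖e‖ ^ 2) ≤ (r - dist (q t) p) * ⟪u t, e⟫ := by
    filter_upwards [hq, hne, hprox, hR.eventually_const_le hr, self_mem_nhdsWithin]
      with t hqt hnet hproxt hRt ht
    exact hqt.neg_le_mul_inner_normalize hp ht hRt hnet hproxt
  have hzero : Tendsto (fun t : ℝ => -(2 * t * ‖e‖ ^ 2)) (𝓝[>] 0) (𝓝 0) := by
    have hcont : Continuous fun t : ℝ => -(2 * t * ‖e‖ ^ 2) := by fun_prop
    simpa using (hcont.tendsto 0).mono_left nhdsWithin_le_nhds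
  have hlim : 0 ≤ r * ⟪v, e⟫ := le_of_tendsto_of_tendsto (hzero.mono_left hUle)
    ((hR.mono_left hUle).mul (huv.inner tendsto_const_nhds)) (hUle hbound)
  exact nonneg_of_mul_nonneg_right hlim hr

lemma frequently_add_smul_sub_mem [ProperSpace E] {ρ : ℝ} (hρ : 0 < ρ) (hp : p ∈ A) (hb : b ∈ A)
    (hreach : ENNReal.ofReal ρ ≤ locReach A p)
    (hnor : ∀ v ∈ Nor A p, v ≠ 0 → ‖b - p‖ ^ 2 * ‖v‖ < 2 * ρ * |⟪v, b - p⟫|) :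
    ∃ᶠ t in 𝓝[>] (0 : ℝ), p + t • (b - p) ∈ A := by
  intro hgap
  obtain ⟨v, hv, hinner, hprox⟩ := exists_isProximalNormal_inner_nonneg hρ hp
    (fun y => unpPt_of_mem_ball_of_le_locReach hreach) hgap
  have hlt := hnor v (hprox.mem_Nor hρ) (norm_ne_zero_iff.1 (hv ▸ one_ne_zero))
  rw [abs_of_nonneg hinner, real_inner_comm] at hlt
  exact (hprox b hb).not_gt hlt

lemma segment_subset_of_le_locReach [ProperSpace E] {ρ : ℝ} (hρ : 0 < ρ) (ha : a ∈ A) (hb : b ∈ A)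
    (hreach : ∀ x ∈ A ∩ segment ℝ a b, ENNReal.ofReal ρ ≤ locReach A x)
    (hnor : ∀ x ∈ A ∩ segment ℝ a b, x ≠ b → ∀ v ∈ Nor A x, v ≠ 0 →
      ‖b - x‖ ^ 2 * ‖v‖ < 2 * ρ * |⟪v, b - x⟫|) :
    segment ℝ a b ⊆ A := by
  rcases eq_or_ne a b with rfl | hab
  · rwa [segment_same, singleton_subset_iff]
  set γ : ℝ → E := fun t => AffineMap.lineMap a b t with hγ
  have hγseg : ∀ t ∈ Icc (0 : ℝ) 1, γ t ∈ segment ℝ a b := fun t => lineMap_mem_segment ℝ a b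
  have hclosed : IsClosed (γ ⁻¹' A ∩ Icc 0 1) := by
    have hAseg : IsClosed (A ∩ segment ℝ a b) := by
      refine isClosed_inter_of_le_locReach hρ ?_ hreach
      rw [← convexHull_pair]
      exact (toFinite {a, b}).isClosed_convexHull ℝ
    have heq : γ ⁻¹' A ∩ Icc 0 1 = γ ⁻¹' (A ∩ segment ℝ a b) ∩ Icc 0 1 := by
      ext t
      exact ⟨fun h => ⟨⟨h.1, hγseg t h.2⟩, h.2⟩, fun h => ⟨h.1.1, h.2⟩⟩
    rw [heq]
    exact (hAseg.preimage AffineMap.lineMap_continuous).inter isClosed_Icc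
  suffices hsub : Icc 0 1 ⊆ γ ⁻¹' A by
    rw [segment_eq_image_lineMap]
    exact image_subset_iff.2 hsub
  refine hclosed.Icc_subset_of_forall_exists_gt (by simpa [hγ]) ?_
  rintro τ ⟨hτA, hτ₀, hτ₁⟩ y (hy : τ < y)
  have hseg : γ τ ∈ A ∩ segment ℝ a b := ⟨hτA, hγseg τ ⟨hτ₀, hτ₁.le⟩⟩
  have hne : γ τ ≠ b := by simpa [hγ, AffineMap.lineMap_eq_right_iff, hab] using hτ₁.ne
  have hfreq := frequently_add_smul_sub_mem hρ hseg.1 hb (hreach _ hseg) (hnor _ hseg hne)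
  have hpos : 0 < 1 - τ := sub_pos.2 hτ₁
  obtain ⟨h, hmem, hh₀, hh⟩ :=
    (hfreq.and_eventually (Ioc_mem_nhdsGT (div_pos (sub_pos.2 hy) hpos))).exists
  refine ⟨τ + h * (1 - τ), ?_, by nlinarith, by linarith [(le_div_iff₀ hpos).1 hh]⟩
  have hγh : γ (τ + h * (1 - τ)) = γ τ + h • (b - γ τ) := by
    simp only [hγ, AffineMap.lineMap_apply_module']
    module
  rwa [mem_preimage, hγh]

theorem stmt10_general [ProperSpace E] {δ ρ η : ℝ} (hρ : 0 < ρ) (hδρη : δ < ρ * η)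
    (hS : Convex ℝ S) (hdist : ∀ x ∈ A ∩ S, ∀ y ∈ A ∩ S, dist x y ≤ 2 * δ)
    (hreach : ∀ x ∈ A ∩ S, ENNReal.ofReal ρ ≤ locReach A x)
    (hnor : ∀ x ∈ A ∩ S, ∀ y ∈ A ∩ S, ∀ v ∈ Nor A x,
      η * ‖v‖ * ‖y - x‖ ≤ |⟪v, y - x⟫|) :
    Convex ℝ (A ∩ S) := by
  refine convex_iff_segment_subset.2 fun a ha b hb => ?_
  have hab : segment ℝ a b ⊆ S := hS.segment_subset ha.2 hb.2
  have hsub : A ∩ segment ℝ a b ⊆ A ∩ S := inter_subset_inter_right A hab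
  refine subset_inter (segment_subset_of_le_locReach hρ ha.1 hb.1
    (fun x hx => hreach x (hsub hx)) fun x hx hxb v hv hv₀ => ?_) hab
  have hbx : 0 < ‖b - x‖ := norm_sub_pos_iff.2 hxb.symm
  have hle : ‖b - x‖ ≤ 2 * δ := by
    rw [← dist_eq_norm]
    exact hdist b hb x (hsub hx)
  calc ‖b - x‖ ^ 2 * ‖v‖
      ≤ 2 * δ * (‖v‖ * ‖b - x‖) := by
        rw [sq, mul_assoc, mul_comm ‖v‖]
        gcongr
    _ < 2 * (ρ * η) * (‖v‖ * ‖b - x‖) := by gcongr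
    _ = 2 * ρ * (η * ‖v‖ * ‖b - x‖) := by ring
    _ ≤ 2 * ρ * |⟪v, b - x⟫| := by
        gcongr
        exact hnor x (hsub hx) b hb v hv

end PositiveReach

lemma convex_verticalSegment (s₀ t₁ t₂ : ℝ) :
    Convex ℝ {x : EuclideanSpace ℝ (Fin 2) | x 0 = s₀ ∧ x 1 ∈ Icc t₁ t₂} :=
  ((convex_singleton s₀).linear_preimage (EuclideanSpace.proj 0).toLinearMap).inter
    ((convex_Icc t₁ t₂).linear_preimage (EuclideanSpace.proj 1).toLinearMap)

lemma sub_eq_smul_single_one {x y : EuclideanSpace ℝ (Fin 2)} (h : x 0 = y 0) :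
    y - x = (y 1 - x 1) • EuclideanSpace.single 1 (1 : ℝ) := by
  ext i
  fin_cases i <;> simp [h]

lemma dist_le_sub_of_mem_verticalSegment {s₀ t₁ t₂ : ℝ} {x y : EuclideanSpace ℝ (Fin 2)}
    (hx : x 0 = s₀ ∧ x 1 ∈ Icc t₁ t₂) (hy : y 0 = s₀ ∧ y 1 ∈ Icc t₁ t₂) :
    dist x y ≤ t₂ - t₁ := by
  rw [dist_eq_norm, sub_eq_smul_single_one (hy.1.trans hx.1.symm), norm_smul,
    PiLp.norm_single, norm_one, mul_one]
  exact Real.dist_le_of_mem_Icc hx.2 hy.2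

lemma mul_norm_sub_le_abs_inner_of_apply_zero_eq {κ : ℝ} {x y v : EuclideanSpace ℝ (Fin 2)}
    (h : x 0 = y 0) (hv : κ ≤ |⟪v, EuclideanSpace.single 1 (1 : ℝ)⟫|) :
    κ * ‖y - x‖ ≤ |⟪v, y - x⟫| := by
  rw [sub_eq_smul_single_one h, norm_smul, PiLp.norm_single, norm_one, mul_one,
    real_inner_smul_right, abs_mul, mul_comm, Real.norm_eq_abs]
  gcongr

/-- A vertical segment meets a set of positive reach (with normals bounded away from
horizontal) in a connected set. -/
theorem stmt10 (δ ρ η : ℝ) (hδ : 0 < δ) (hρ : 0 < ρ) (hη0 : 0 < η) (hη1 : η < 1)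
    (hδρη : δ < ρ * η)
    (A : Set (EuclideanSpace ℝ (Fin 2))) (s₀ t₁ t₂ : ℝ) (hlen : t₂ - t₁ ≤ 2 * δ)
    (S : Set (EuclideanSpace ℝ (Fin 2)))
    (hS : S = {x : EuclideanSpace ℝ (Fin 2) | x 0 = s₀ ∧ x 1 ∈ Icc t₁ t₂})
    (hreach : ∀ x ∈ A ∩ S, ENNReal.ofReal ρ ≤ locReach A x)
    (hnor : ∀ x ∈ A ∩ S, ∀ v ∈ Nor A x,
      η * ‖v‖ ≤ |⟪v, EuclideanSpace.single 1 (1:ℝ)⟫|) :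
    IsPreconnected (A ∩ S) := by
  subst hS
  exact (stmt10_general hρ hδρη (convex_verticalSegment s₀ t₁ t₂)
    (fun x hx y hy => (dist_le_sub_of_mem_verticalSegment hx.2 hy.2).trans hlen) hreach
    fun x hx y hy v hv => mul_norm_sub_le_abs_inner_of_apply_zero_eq
      (hx.2.1.trans hy.2.1.symm) (hnor x hx v hv)).isPreconnected
end
end

section
/- Let φ : I → ℝ be a function on an interval I ⊆ ℝ with graph(φ) ⊆ A ⊆ ℝ². Let δ, ρ > 0 and 0 < η < 1 satisfy 2δ < ρη and diam(graph φ) ≤ 2δ, and suppose for every x ∈ graph φ we have reach(A, x) > ρ and there exists a unit vector v ∈ Nor(A, x) with ⟨v, e₂⟩ ≥ η. Then φ is Lipschitz. -/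
open Metric Set Filter
open scoped ENNReal RealInnerProductSpace Topology NNReal

noncomputable section

variable {E : Type*} [NormedAddCommGroup E] [InnerProductSpace ℝ E]

/-!
The heart of the matter is Federer's inequality `2 * ρ * ⟪v, b - x⟫ ≤ ‖v‖ * ‖b - x‖ ^ 2` for a
normal `v` of `A` at a point `x` of reach greater than `ρ`. It says that the ball of radius `ρ`
touching `A` at `x` in direction `v` contains no point of `A` in its interior. This holds because,
as long as nearest points are unique, the distance to `A` can be increased at unit speed, while
near `x` it grows at unit speed in the direction `v`.

If `x` and `y` lie on the graph, the inequality with the diameter bound gives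
`ρ * ⟪v, y - x⟫ ≤ δ * ‖y - x‖`. Since the vertical component of the unit normal `v` is at least
`η > δ / ρ`, this bounds the height difference of `x` and `y` by a multiple of their horizontal
distance.
-/

section MetricProjection

variable {X : Type*} [PseudoMetricSpace X] {A : Set X}

/-- The metric projection onto `A` as a set-valued map: `metricProj A x` is the set of all points
of `A` nearest to `x`. It may be empty when `A` is not closed. -/
def metricProj (A : Set X) (x : X) : Set X :=
  {a ∈ A | dist x a = infDist x A}

theorem upperHemicontinuous_metricProj [ProperSpace X] (hA : IsClosed A) :
    UpperHemicontinuous (metricProj A) := by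
  refine upperHemicontinuous_iff_forall_isOpen.2 fun x U hU hxU => ?_
  have hK : IsCompact ((closedBall x (infDist x A + 2) ∩ A) \ U) :=
    ((isCompact_closedBall x _).inter_right hA).diff hU
  have hfar : ∀ᶠ y in 𝓝 x, ∀ b ∈ (closedBall x (infDist x A + 2) ∩ A) \ U,
      dist y b ≠ infDist y A := by
    refine hK.eventually_forall_of_forall_eventually fun b hb => ?_
    have hopen : IsOpen {z : X × X | dist z.1 z.2 ≠ infDist z.1 A} :=
      isOpen_ne_fun continuous_dist ((continuous_infDist_pt A).comp continuous_fst)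
    exact hopen.mem_nhds fun hxb => hb.2 (hxU ⟨hb.1.2, hxb⟩)
  filter_upwards [hfar, ball_mem_nhds x one_pos] with y hy hyx b ⟨hbA, hyb⟩
  by_contra hbU
  refine hy b ⟨⟨?_, hbA⟩, hbU⟩ hyb
  have hyx' : dist y x < 1 := hyx
  have hinf : infDist y A ≤ infDist x A + dist y x := infDist_le_infDist_add_dist
  have htri := dist_triangle_left b x y
  rw [mem_closedBall]
  linarith

end MetricProjection

section UniqueNearestPoint

variable {V : Type*} [NormedAddCommGroup V] {A : Set V} {q : V}

theorem unpPt_iff_exists_metricProj_eq_singleton :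
    UnpPt A q ↔ ∃ a, metricProj A q = {a} :=
  singleton_iff_unique_mem.symm

variable [NormedSpace ℝ V] [StrictConvexSpace ℝ V]

theorem metricProj_lineMap_subset_singleton {b : V} (hb : b ∈ metricProj A q) {t : ℝ}
    (ht0 : 0 < t) (ht1 : t ≤ 1) : metricProj A (AffineMap.lineMap q b t) ⊆ {b} := by
  intro c hc
  set y : V := AffineMap.lineMap q b t with hy
  have hqy : dist q y = t * dist q b := by
    rw [hy, dist_left_lineMap, Real.norm_of_nonneg ht0.le]
  have hyb : dist y b = (1 - t) * dist q b := by
    rw [hy, dist_lineMap_right, Real.norm_of_nonneg (sub_nonneg.2 ht1)]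
  have hqc_ge : dist q b ≤ dist q c := hb.2.trans_le (infDist_le_dist_of_mem hc.1)
  have hyc_le : dist y c ≤ dist y b := hc.2.trans_le (infDist_le_dist_of_mem hb.1)
  have htri := dist_triangle q y c
  have hqc : dist q c = dist q b := by linarith
  have hyc : y = AffineMap.lineMap q c t :=
    eq_lineMap_of_dist_eq_mul_of_dist_eq_mul (by rw [hqc, hqy]) (by rw [hqc]; linarith)
  have hsmul : t • (b - q) = t • (c - q) := by
    simpa only [AffineMap.lineMap_apply_module', add_left_inj] using hy.symm.trans hyc
  exact (sub_left_injective (smul_right_injective V ht0.ne' hsmul)).symm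

-- A point `b` of `closure A` nearest to `q` is the only nearest point for every point of the open
-- segment from `q` to `b`; as some of these have a nearest point in `A`, that point is `b`.
theorem metricProj_closure_eq (hU : ∀ᶠ y in 𝓝 q, UnpPt A y) :
    metricProj (closure A) q = metricProj A q := by
  have hsub (y : V) : metricProj A y ⊆ metricProj (closure A) y := fun a ha =>
    ⟨subset_closure ha.1, by rw [infDist_closure]; exact ha.2⟩
  refine Subset.antisymm (fun b hb => ⟨?_, by rw [← infDist_closure]; exact hb.2⟩) (hsub q)
  have hlim : Tendsto (fun t : ℝ => AffineMap.lineMap q b t) (𝓝[>] 0) (𝓝 q) := by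
    have hcont : Continuous fun t : ℝ => (AffineMap.lineMap q b t : V) :=
      AffineMap.lineMap_continuous
    exact (hcont.tendsto' 0 q (AffineMap.lineMap_apply_zero q b)).mono_left nhdsWithin_le_nhds
  obtain ⟨t, ht, ht0, ht1⟩ :=
    ((hlim.eventually hU).and (Ioc_mem_nhdsGT (zero_lt_one' ℝ))).exists
  obtain ⟨a, ha, -⟩ := ht
  exact metricProj_lineMap_subset_singleton hb ht0 ht1 (hsub _ ha) ▸ ha.1

theorem unpPt_closure (hU : ∀ᶠ y in 𝓝 q, UnpPt A y) : UnpPt (closure A) q := by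
  rw [unpPt_iff_exists_metricProj_eq_singleton, metricProj_closure_eq hU,
    ← unpPt_iff_exists_metricProj_eq_singleton]
  exact hU.self_of_nhds

end UniqueNearestPoint

section GrowthOfDistance

theorem tendsto_add_smul_nhdsGT_zero_s11 {V : Type*} [AddCommGroup V] [Module ℝ V]
    [TopologicalSpace V] [ContinuousAdd V] [ContinuousSMul ℝ V] (q w : V) :
    Tendsto (fun h : ℝ => q + h • w) (𝓝[>] 0) (𝓝 q) :=
  ((by fun_prop : Continuous fun h : ℝ => q + h • w).tendsto' 0 q
    (by rw [zero_smul, add_zero])).mono_left nhdsWithin_le_nhds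

variable [ProperSpace E] {A : Set E}

-- The nearest point `b` of `q + h • (q - a)` is close to `a`, so that `q - a` and `q - b` are
-- almost parallel and moving by `h • (q - a)` increases the distance to `b` almost by its length.
theorem eventually_le_infDist_add_smul_sub (hA : IsClosed A) {q a : E}
    (ha : metricProj A q = {a}) (hq : 0 < infDist q A) {c : ℝ} (hc : c < 1) :
    ∀ᶠ h in 𝓝[>] (0 : ℝ), infDist q A + c * (h * ‖q - a‖) ≤ infDist (q + h • (q - a)) A := by
  obtain ⟨haA, hqa⟩ : a ∈ metricProj A q := ha ▸ mem_singleton a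
  rw [dist_eq_norm] at hqa
  let U : Set E := {b | c * ‖q - a‖ * ‖q - b‖ < ⟪q - a, q - b⟫}
  have hU : IsOpen U := isOpen_lt (by fun_prop) (by fun_prop)
  have haU : metricProj A q ⊆ U := by
    rw [ha, singleton_subset_iff]
    change c * ‖q - a‖ * ‖q - a‖ < ⟪q - a, q - a⟫
    rw [real_inner_self_eq_norm_mul_norm, hqa, mul_assoc]
    exact mul_lt_of_lt_one_left (mul_pos hq hq) hc
  have hproj := (tendsto_add_smul_nhdsGT_zero_s11 q (q - a)).eventually
    (upperHemicontinuous_iff_forall_isOpen.1 (upperHemicontinuous_metricProj hA) q U hU haU)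
  filter_upwards [hproj, self_mem_nhdsWithin] with h hsub (hh : 0 < h)
  obtain ⟨b, hbA, hb⟩ := hA.exists_infDist_eq_dist ⟨a, haA⟩ (q + h • (q - a))
  have hbU : c * ‖q - a‖ * ‖q - b‖ < ⟪q - a, q - b⟫ := hsub ⟨hbA, hb.symm⟩
  have hqb : infDist q A ≤ ‖q - b‖ := dist_eq_norm q b ▸ infDist_le_dist_of_mem hbA
  have hCS : ‖q - b‖ * ‖q - b‖ + h * ⟪q - a, q - b⟫ ≤ ‖q + h • (q - a) - b‖ * ‖q - b‖ := by
    rw [← real_inner_self_eq_norm_mul_norm, ← real_inner_smul_left, ← inner_add_left,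
      ← add_sub_right_comm]
    exact real_inner_le_norm _ _
  have hgrow : (‖q - b‖ + c * (h * ‖q - a‖)) * ‖q - b‖ ≤ ‖q + h • (q - a) - b‖ * ‖q - b‖ := by
    linarith [mul_le_mul_of_nonneg_left hbU.le hh.le]
  rw [hb, dist_eq_norm]
  linarith [le_of_mul_le_mul_right hgrow (hq.trans_le hqb)]

-- A maximizer of `infDist · A - c * dist · p` over the ball cannot lie in its interior, where
-- `infDist · A` has slope one in some direction.
theorem exists_dist_eq_and_add_mul_le_infDist (hA : IsClosed A) {p : E} {s : ℝ} (hs : 0 ≤ s)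
    (hU : ∀ y ∈ ball p s, UnpPt A y) (hp : 0 < infDist p A) {c : ℝ} (hc0 : 0 ≤ c) (hc1 : c < 1) :
    ∃ z, dist z p = s ∧ infDist p A + c * s ≤ infDist z A := by
  have hpmem : p ∈ closedBall p s := mem_closedBall_self hs
  have hcont : Continuous fun y => infDist y A - c * dist y p :=
    (continuous_infDist_pt A).sub (by fun_prop)
  obtain ⟨z, hz, hmax⟩ :=
    (isCompact_closedBall p s).exists_isMaxOn ⟨p, hpmem⟩ hcont.continuousOn
  have hpz : infDist p A ≤ infDist z A - c * dist z p := by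
    simpa only [dist_self, mul_zero, sub_zero] using isMaxOn_iff.1 hmax p hpmem
  suffices hzs : dist z p = s from ⟨z, hzs, by rw [hzs] at hpz; linarith⟩
  by_contra hne
  have hlt : dist z p < s := lt_of_le_of_ne hz hne
  obtain ⟨a, ha⟩ := unpPt_iff_exists_metricProj_eq_singleton.1 (hU z hlt)
  have hzA : 0 < infDist z A := by
    linarith [mul_nonneg hc0 (dist_nonneg (x := z) (y := p))]
  have hza : 0 < ‖z - a‖ := by
    obtain ⟨-, hza⟩ : a ∈ metricProj A z := ha ▸ mem_singleton a
    rwa [← dist_eq_norm, hza]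
  have hslope := eventually_le_infDist_add_smul_sub hA ha hzA (c := (c + 1) / 2) (by linarith)
  have hlocal := (tendsto_add_smul_nhdsGT_zero_s11 z (z - a)).eventually
    (hmax.isLocalMax (mem_of_superset (isOpen_ball.mem_nhds hlt) ball_subset_closedBall))
  obtain ⟨h, ⟨hgrow, hmax_le⟩, hh⟩ := ((hslope.and hlocal).and self_mem_nhdsWithin).exists
  have hhpos : 0 < h * ‖z - a‖ := mul_pos hh hza
  have hdist : dist (z + h • (z - a)) p ≤ h * ‖z - a‖ + dist z p := by
    refine (dist_triangle _ z p).trans_eq ?_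
    rw [dist_eq_norm, add_sub_cancel_left, norm_smul, Real.norm_of_nonneg (le_of_lt hh)]
  linarith [mul_le_mul_of_nonneg_left hdist hc0, mul_pos (sub_pos.2 hc1) hhpos]

theorem exists_mem_closedBall_add_le_infDist (hA : IsClosed A) {p : E} {s : ℝ} (hs : 0 ≤ s)
    (hU : ∀ y ∈ ball p s, UnpPt A y) (hp : 0 < infDist p A) :
    ∃ q ∈ closedBall p s, infDist p A + s ≤ infDist q A := by
  obtain ⟨q, hq, hmax⟩ := (isCompact_closedBall p s).exists_isMaxOn ⟨p, mem_closedBall_self hs⟩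
    (continuous_infDist_pt A).continuousOn
  refine ⟨q, hq, ?_⟩
  have hlim : Tendsto (fun c : ℝ => infDist p A + c * s) (𝓝[<] 1) (𝓝 (infDist p A + s)) :=
    ((by fun_prop : Continuous fun c : ℝ => infDist p A + c * s).tendsto' 1 _
      (by rw [one_mul])).mono_left nhdsWithin_le_nhds
  refine le_of_tendsto hlim ?_
  filter_upwards [Ico_mem_nhdsLT (zero_lt_one' ℝ)] with c hc
  obtain ⟨z, hz, hgrow⟩ := exists_dist_eq_and_add_mul_le_infDist hA hs hU hp hc.1 hc.2
  exact hgrow.trans (hmax hz.le)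

end GrowthOfDistance

section NormalCone

variable {A : Set E} {x v : E}

theorem smul_mem_Nor (hv : v ∈ Nor A x) {c : ℝ} (hc : 0 ≤ c) : c • v ∈ Nor A x := fun u hu => by
  rw [real_inner_smul_left]
  exact mul_nonpos_of_nonneg_of_nonpos hc (hv u hu)

variable [ProperSpace E]

theorem eventually_inner_sub_le_of_mem_Nor (hv : v ∈ Nor A x) {ε : ℝ} (hε : 0 < ε) :
    ∀ᶠ a in 𝓝[A] x, ⟪v, a - x⟫ ≤ ε * ‖a - x‖ := by
  by_contra hcon
  have hfreq : ∃ᶠ a in 𝓝[A] x, ε * ‖a - x‖ < ⟪v, a - x⟫ ∧ a ∈ A := by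
    simp only [not_eventually, not_le] at hcon
    exact hcon.and_eventually self_mem_nhdsWithin
  obtain ⟨a, hlim, ha⟩ := exists_seq_forall_of_frequently hfreq
  have hne (k : ℕ) : a k ≠ x := by
    intro hk
    simpa only [hk, sub_self, norm_zero, mul_zero, inner_zero_right, lt_self_iff_false]
      using (ha k).1
  have hpos (k : ℕ) : 0 < ‖a k - x‖ := norm_pos_iff.2 (sub_ne_zero.2 (hne k))
  have hmem (k : ℕ) : ‖a k - x‖⁻¹ • (a k - x) ∈ closedBall (0 : E) 1 :=
    mem_closedBall_zero_iff.2 (norm_smul_inv_norm (𝕜 := ℝ) (sub_ne_zero.2 (hne k))).le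
  obtain ⟨u, -, f, hf, hu⟩ := (isCompact_closedBall (0 : E) 1).tendsto_subseq hmem
  have huT : u ∈ Tan A x := Or.inr ⟨a ∘ f, fun k => ‖a (f k) - x‖⁻¹,
    fun k => ⟨(ha _).2, hne _, inv_pos.2 (hpos _)⟩,
    (tendsto_nhds_of_tendsto_nhdsWithin hlim).comp hf.tendsto_atTop, hu⟩
  have hεu : ε ≤ ⟪v, u⟫ := by
    refine ge_of_tendsto' (tendsto_const_nhds.inner hu) fun k => ?_
    rw [Function.comp_apply, real_inner_smul_right, inv_mul_eq_div, le_div_iff₀ (hpos _)]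
    exact (ha _).1.le
  exact (hε.trans_le hεu).not_ge (hv u huT)

theorem eventually_mul_le_infDist_add_smul_of_mem_Nor (hx : x ∈ A) (hv : v ∈ Nor A x)
    (hv1 : ‖v‖ = 1) {c : ℝ} (hc : c < 1) :
    ∀ᶠ t in 𝓝[>] (0 : ℝ), c * t ≤ infDist (x + t • v) A := by
  have hε : 0 < (1 - c) / 2 := by linarith
  obtain ⟨κ, hκ, hnear⟩ := mem_nhdsWithin_iff.1 (eventually_inner_sub_le_of_mem_Nor hv hε)
  filter_upwards [Ioo_mem_nhdsGT (half_pos hκ)] with t ⟨ht0, htκ⟩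
  refine (le_infDist ⟨x, hx⟩).2 fun b hb => ?_
  rw [dist_eq_norm, show x + t • v - b = t • v - (b - x) by abel]
  have htv : ‖t • v‖ = t := by rw [norm_smul, hv1, mul_one, Real.norm_of_nonneg ht0.le]
  rcases le_or_gt (2 * t) ‖b - x‖ with hfar | hclose
  · have htri := norm_sub_norm_le (b - x) (t • v)
    rw [norm_sub_rev (b - x), htv] at htri
    linarith [mul_lt_of_lt_one_left ht0 hc]
  · have hinner : ⟪v, b - x⟫ ≤ (1 - c) / 2 * ‖b - x‖ :=
      hnear ⟨by rw [mem_ball, dist_eq_norm]; linarith, hb⟩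
    calc c * t = t - (1 - c) / 2 * (2 * t) := by ring
      _ ≤ t - (1 - c) / 2 * ‖b - x‖ :=
        sub_le_sub_left (mul_le_mul_of_nonneg_left hclose.le hε.le) t
      _ ≤ t - ⟪v, b - x⟫ := sub_le_sub_left hinner t
      _ = ⟪v, t • v - (b - x)⟫ := by
        rw [inner_sub_right v (t • v), real_inner_smul_right, real_inner_self_eq_norm_sq, hv1,
          one_pow, mul_one]
      _ ≤ ‖t • v - (b - x)‖ := by simpa only [hv1, one_mul] using real_inner_le_norm v _

end NormalCone

section Reach

theorem exists_gt_forall_unpPt_of_lt_locReach {V : Type*} [NormedAddCommGroup V] {A : Set V}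
    {x : V} {ρ : ℝ} (hρ : 0 ≤ ρ)
    (h : ENNReal.ofReal ρ < locReach A x) : ∃ r > ρ, ∀ y ∈ ball x r, UnpPt A y := by
  obtain ⟨r, hr, hρr⟩ : ∃ r : ℝ≥0, (∀ y, dist y x < r → UnpPt A y) ∧ ENNReal.ofReal ρ < r := by
    simpa only [locReach, lt_iSup_iff, exists_prop] using h
  rw [← ENNReal.ofReal_coe_nnreal] at hρr
  exact ⟨r, (ENNReal.ofReal_lt_ofReal_iff_of_nonneg hρ).1 hρr, hr⟩

variable {A : Set E} {x v : E}

theorem norm_sub_smul_sq_le_of_norm_sub_smul_le {w : E} {s t c : ℝ} (hv : ‖v‖ = 1)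
    (hs : 0 ≤ s) (ht : 0 < t) (hwt : ‖w - t • v‖ ≤ s) (hw : s + c * t ≤ ‖w‖) (hc : 0 ≤ c) :
    ‖w - s • v‖ ^ 2 ≤ 2 * s ^ 2 * (1 - c) + 2 * s * t + t ^ 2 := by
  have hexpand (r : ℝ) : ‖w - r • v‖ ^ 2 = ‖w‖ ^ 2 - 2 * r * ⟪w, v⟫ + r ^ 2 := by
    rw [norm_sub_sq_real, real_inner_smul_right, norm_smul, hv, mul_one, Real.norm_eq_abs, sq_abs]
    ring
  have hw_le : ‖w‖ ≤ s + t := by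
    have := norm_le_norm_sub_add w (t • v)
    rw [norm_smul, hv, mul_one, Real.norm_of_nonneg ht.le] at this
    linarith
  have hinner : s * c ≤ ⟪w, v⟫ := by
    have hsq_le : ‖w - t • v‖ ^ 2 ≤ s ^ 2 := pow_le_pow_left₀ (norm_nonneg _) hwt 2
    have hsq_ge : (s + c * t) ^ 2 ≤ ‖w‖ ^ 2 := pow_le_pow_left₀ (by positivity) hw 2
    rw [hexpand] at hsq_le
    have hmul : t * (s * c) ≤ t * ⟪w, v⟫ := by nlinarith [sq_nonneg (c * t)]
    exact le_of_mul_le_mul_left hmul ht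
  have hw_sq : ‖w‖ ^ 2 ≤ (s + t) ^ 2 := pow_le_pow_left₀ (norm_nonneg _) hw_le 2
  rw [hexpand]
  linarith [mul_le_mul_of_nonneg_left hinner hs]

variable [ProperSpace E]

-- For small `t` the distance of `x + t • v` to `A` is almost `t`, so within `s` of this point there
-- is a `q` at distance almost `s + t` from `A`, hence from `x`: it must be close to `x + s • v`.
theorem le_infDist_add_smul_of_mem_Nor {r s : ℝ} (hx : x ∈ A) (hU : ∀ y ∈ ball x r, UnpPt A y)
    (hv : v ∈ Nor A x) (hv1 : ‖v‖ = 1) (hs : 0 ≤ s) (hsr : s < r) :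
    s ≤ infDist (x + s • v) A := by
  have hclosed : IsClosed {q | s ≤ infDist q A} :=
    isClosed_le continuous_const (continuous_infDist_pt A)
  refine hclosed.closure_subset (Metric.mem_closure_iff.2 fun ε hε => ?_)
  obtain ⟨c, hcε, hc0, hc1⟩ : ∃ c : ℝ, 2 * s ^ 2 * (1 - c) < ε ^ 2 ∧ c ∈ Ioo 0 1 := by
    have hcont : ContinuousAt (fun c : ℝ => 2 * s ^ 2 * (1 - c)) 1 := by fun_prop
    have hlt := hcont.tendsto.eventually_lt_const (show 2 * s ^ 2 * (1 - 1) < ε ^ 2 by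
      rw [sub_self, mul_zero]; positivity)
    exact ((hlt.filter_mono nhdsWithin_le_nhds).and (Ioo_mem_nhdsLT zero_lt_one)).exists
  have hsmall : ∀ᶠ t in 𝓝[>] (0 : ℝ), 2 * s ^ 2 * (1 - c) + 2 * s * t + t ^ 2 < ε ^ 2 := by
    have hcont : Continuous fun t : ℝ => 2 * s ^ 2 * (1 - c) + 2 * s * t + t ^ 2 := by fun_prop
    refine ((hcont.tendsto 0).eventually_lt_const ?_).filter_mono nhdsWithin_le_nhds
    linarith
  obtain ⟨t, ⟨htε, hdist⟩, ht0, htr⟩ :=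
    ((hsmall.and (eventually_mul_le_infDist_add_smul_of_mem_Nor hx hv hv1 hc1)).and
      (Ioo_mem_nhdsGT (sub_pos.2 hsr))).exists
  have hball : ball (x + t • v) s ⊆ ball x r := ball_subset_ball' (by
    rw [dist_self_add_left, norm_smul, hv1, mul_one, Real.norm_of_nonneg ht0.le]; linarith)
  obtain ⟨q, hq, hgrow⟩ := exists_mem_closedBall_add_le_infDist isClosed_closure hs
    (fun y hy => unpPt_closure (mem_of_superset (isOpen_ball.mem_nhds (hball hy)) hU))
    (by rw [infDist_closure]; exact (mul_pos hc0 ht0).trans_le hdist)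
  rw [infDist_closure, infDist_closure] at hgrow
  refine ⟨q, (le_add_of_nonneg_left infDist_nonneg).trans hgrow, ?_⟩
  have hqx : infDist q A ≤ ‖q - x‖ := dist_eq_norm q x ▸ infDist_le_dist_of_mem hx
  have hsq : ‖q - x - s • v‖ ^ 2 ≤ 2 * s ^ 2 * (1 - c) + 2 * s * t + t ^ 2 :=
    norm_sub_smul_sq_le_of_norm_sub_smul_le hv1 hs ht0 (by rwa [sub_sub, ← dist_eq_norm])
      (by linarith) hc0.le
  rw [dist_comm, dist_eq_norm, ← sub_sub]
  exact lt_of_pow_lt_pow_left₀ 2 hε.le (hsq.trans_lt htε)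

theorem two_mul_inner_sub_le_of_lt_locReach {ρ : ℝ} (hρ : 0 ≤ ρ) (hx : x ∈ A)
    (hreach : ENNReal.ofReal ρ < locReach A x) (hv : v ∈ Nor A x) {b : E} (hb : b ∈ A) :
    2 * ρ * ⟪v, b - x⟫ ≤ ‖v‖ * ‖b - x‖ ^ 2 := by
  rcases eq_or_ne v 0 with rfl | hv0
  · rw [inner_zero_left, norm_zero, mul_zero, zero_mul]
  obtain ⟨r, hρr, hU⟩ := exists_gt_forall_unpPt_of_lt_locReach hρ hreach
  set n : E := ‖v‖⁻¹ • v with hn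
  have hn1 : ‖n‖ = 1 := norm_smul_inv_norm (𝕜 := ℝ) hv0
  have hball : ρ ≤ ‖b - x - ρ • n‖ := by
    rw [sub_sub, ← dist_eq_norm']
    exact (le_infDist_add_smul_of_mem_Nor hx hU
      (smul_mem_Nor hv (inv_nonneg.2 (norm_nonneg v))) hn1 hρ hρr).trans (infDist_le_dist_of_mem hb)
  have hsq : ρ ^ 2 ≤ ‖b - x - ρ • n‖ ^ 2 := pow_le_pow_left₀ hρ hball 2
  rw [norm_sub_sq_real, norm_smul, hn1, Real.norm_of_nonneg hρ, real_inner_smul_right,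
    real_inner_comm] at hsq
  have hvn : ⟪v, b - x⟫ = ‖v‖ * ⟪n, b - x⟫ := by
    rw [hn, real_inner_smul_left, mul_inv_cancel_left₀ (norm_ne_zero_iff.2 hv0)]
  rw [hvn]
  linarith [mul_le_mul_of_nonneg_left hsq (norm_nonneg v)]

end Reach

section Graph

variable [ProperSpace E] {δ ρ η : ℝ} {A : Set E} {e : E}

theorem mul_height_le_of_lt_locReach {x y u v : E} {h : ℝ} (hρ : 0 ≤ ρ) (hδρη : δ < ρ * η)
    (hx : x ∈ A) (hy : y ∈ A) (hxy : dist y x ≤ 2 * δ) (hreach : ENNReal.ofReal ρ < locReach A x)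
    (hv : v ∈ Nor A x) (hv1 : ‖v‖ = 1) (hη : η ≤ ⟪v, e⟫) (he : ‖e‖ = 1)
    (hyx : y - x = u + h • e) :
    (ρ * η - δ) * h ≤ (ρ + δ) * ‖u‖ := by
  rw [dist_eq_norm, hyx] at hxy
  have hδ : 0 ≤ δ := by linarith [norm_nonneg (u + h • e)]
  rcases le_total h 0 with hh | hh
  · exact (mul_nonpos_of_nonneg_of_nonpos (sub_pos.2 hδρη).le hh).trans (by positivity)
  have hfederer := two_mul_inner_sub_le_of_lt_locReach hρ hx hreach hv hy
  rw [hyx, hv1, one_mul] at hfederer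
  have hnorm : ‖u + h • e‖ ≤ ‖u‖ + h := by
    simpa only [norm_smul, he, mul_one, Real.norm_of_nonneg hh] using norm_add_le u (h • e)
  have hupper : ρ * ⟪v, u + h • e⟫ ≤ δ * (‖u‖ + h) := by
    nlinarith [mul_le_mul_of_nonneg_right hxy (norm_nonneg (u + h • e)),
      mul_le_mul_of_nonneg_left hnorm hδ]
  have hlower : η * h - ‖u‖ ≤ ⟪v, u + h • e⟫ := by
    have hvu := neg_le_of_abs_le (abs_real_inner_le_norm v u)
    rw [hv1, one_mul] at hvu
    rw [inner_add_right, real_inner_smul_right]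
    linarith [mul_le_mul_of_nonneg_left hη hh]
  linarith [mul_le_mul_of_nonneg_left hlower hρ]

theorem stmt11_general {X : Type*} [PseudoMetricSpace X] {I : Set X} {φ : X → ℝ}
    {base : X → E} {K : ℝ≥0} (hbase : LipschitzOnWith K base I) (he : ‖e‖ = 1)
    {G : Set E} (hG : G = (fun s => base s + φ s • e) '' I) (hGA : G ⊆ A)
    (hρ : 0 ≤ ρ) (hδρη : δ < ρ * η) (hdiam : ∀ x ∈ G, ∀ y ∈ G, dist x y ≤ 2 * δ)
    (hreach : ∀ x ∈ G, ENNReal.ofReal ρ < locReach A x)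
    (hnor : ∀ x ∈ G, ∃ v ∈ Nor A x, ‖v‖ = 1 ∧ η ≤ ⟪v, e⟫) :
    ∃ C : ℝ≥0, LipschitzOnWith C φ I := by
  subst hG
  refine ⟨_, LipschitzOnWith.of_le_add_mul' ((ρ + δ) / (ρ * η - δ) * K) fun s hs t ht => ?_⟩
  have hsG := mem_image_of_mem (fun s => base s + φ s • e) hs
  have htG := mem_image_of_mem (fun s => base s + φ s • e) ht
  obtain ⟨v, hv, hv1, hη⟩ := hnor _ htG
  have hheight : (ρ * η - δ) * (φ s - φ t) ≤ (ρ + δ) * ‖base s - base t‖ :=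
    mul_height_le_of_lt_locReach hρ hδρη (hGA htG) (hGA hsG) (hdiam _ hsG _ htG) (hreach _ htG)
      hv hv1 hη he (by rw [sub_smul]; abel)
  have hδ : 0 ≤ δ := by linarith [(dist_nonneg).trans (hdiam _ hsG _ htG)]
  have hslope : (ρ * η - δ) * (φ s - φ t) ≤ (ρ + δ) * (K * dist s t) :=
    hheight.trans (mul_le_mul_of_nonneg_left
      (dist_eq_norm (base s) _ ▸ hbase.dist_le_mul s hs t ht) (by positivity))
  rw [← sub_le_iff_le_add', mul_assoc, div_mul_eq_mul_div, le_div_iff₀' (sub_pos.2 hδρη)]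
  exact hslope

theorem setOf_graph_eq_image (I : Set ℝ) (φ : ℝ → ℝ) :
    {x : EuclideanSpace ℝ (Fin 2) | x 0 ∈ I ∧ x 1 = φ (x 0)} =
      (fun s => EuclideanSpace.single 0 s + φ s • EuclideanSpace.single 1 (1 : ℝ)) '' I := by
  ext x
  refine ⟨fun ⟨hx, hφ⟩ => ⟨x 0, hx, ?_⟩, ?_⟩
  · ext i
    fin_cases i <;> simp [hφ]
  · rintro ⟨s, hs, rfl⟩
    simpa using hs

end Graph

/-- A function whose graph lies in a set of positive reach with normals uniformly
pointing upwards is Lipschitz. -/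
theorem stmt11 (δ ρ η : ℝ) (hδ : 0 < δ) (hρ : 0 < ρ) (hη0 : 0 < η) (hη1 : η < 1)
    (hδρη : 2 * δ < ρ * η)
    (I : Set ℝ) (hI : I.OrdConnected) (φ : ℝ → ℝ)
    (A G : Set (EuclideanSpace ℝ (Fin 2)))
    (hG : G = {x : EuclideanSpace ℝ (Fin 2) | x 0 ∈ I ∧ x 1 = φ (x 0)})
    (hGA : G ⊆ A)
    (hdiam : ∀ x ∈ G, ∀ y ∈ G, dist x y ≤ 2 * δ)
    (hreach : ∀ x ∈ G, ENNReal.ofReal ρ < locReach A x)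
    (hnor : ∀ x ∈ G, ∃ v ∈ Nor A x, ‖v‖ = 1 ∧
      η ≤ ⟪v, EuclideanSpace.single 1 (1:ℝ)⟫) :
    ∃ C : ℝ≥0, LipschitzOnWith C φ I := by
  have hbase : Isometry fun s : ℝ => EuclideanSpace.single (0 : Fin 2) s :=
    Isometry.of_dist_eq (PiLp.dist_single_same 2 (fun _ => ℝ) 0)
  exact stmt11_general hbase.lipschitz.lipschitzOnWith (by simp)
    (hG.trans (setOf_graph_eq_image I φ)) hGA hρ.le (by linarith) hdiam hreach hnor
end
end

section
/- Let A ⊆ ℝ^d have reach A > ρ > 0, let W ⊆ ℝ^d be a k-dimensional subspace (1 ≤ k ≤ d−1) with V := W^⊥, let K > 0, let U ⊆ W be an open ball, and let φ : U → V be a K-Lipschitz map such that P := {w + φ(w) : w ∈ U} is a relatively open subset of A. Then φ is a C^{1,1} map and φ' : U → L(W, V) is Lipschitz with constant μ(2+K)³/ρ for some absolute constant μ. -/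
open Metric Set Filter
open scoped ENNReal RealInnerProductSpace Topology NNReal

noncomputable section

variable {E : Type*} [NormedAddCommGroup E] [InnerProductSpace ℝ E]

/-!
Rademacher's theorem provides a dense set of points `w` at which `φ` has a derivative `L`. There
`e - L† e` is normal to the graph, hence to `A`, for every `e ∈ Wᗮ`. Federer's inequality
`2ρ⟪u, b - a⟫ ≤ ‖u‖ ‖b - a‖²` for `u` normal to `A` at `a`, applied with `e` the Taylor remainder
itself, gives `‖φ w' - φ w - L (w' - w)‖ ≤ (1 + K)³ / (2ρ) ‖w' - w‖²` for all `w' ∈ U`. This bound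
is uniform in `w`, so it survives limits of differentiability points and holds at every `w ∈ U`.
Comparing the expansions of `φ` at two nearby points bounds the change of the derivative by
`3 (1 + K)³ / ρ` times their distance, and along segments the local bound becomes global.

Federer's inequality itself rests on the fact that the distance to `A` grows at unit rate away
from a nearest point as long as it stays below the reach. So if `p ∈ A` is nearest to some `x ≠ p`
with `dist x p < ρ`, the open ball of radius `ρ` which touches `A` at `p` in the direction `x - p`
misses `A`.
-/

section Reach

variable {X : Type*} [NormedAddCommGroup X] {A : Set X} {a x : X} {ρ : ℝ}

theorem unpPt_of_edist_lt_locReach (h : edist x a < locReach A a) : UnpPt A x := by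
  obtain ⟨r, hr⟩ := lt_iSup_iff.1 h
  obtain ⟨hUnp, hxr⟩ := lt_iSup_iff.1 hr
  exact hUnp x (edist_lt_coe.1 hxr)

theorem unpPt_of_infEDist_lt_setReach (h : infEDist x A < setReach A) : UnpPt A x := by
  obtain ⟨a, ha, hxa⟩ := infEDist_lt_iff.1 h
  exact unpPt_of_edist_lt_locReach (hxa.trans_le (iInf₂_le a ha))

theorem unpPt_of_infDist_lt (hA : ENNReal.ofReal ρ ≤ setReach A) (hne : A.Nonempty)
    (hx : infDist x A < ρ) : UnpPt A x :=
  unpPt_of_infEDist_lt_setReach <|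
    ((ENNReal.lt_ofReal_iff_toReal_lt (infEDist_ne_top hne)).2 hx).trans_le hA

theorem isClosed_of_setReach_pos (h : 0 < setReach A) : IsClosed A := by
  refine isClosed_of_closure_subset fun x hx ↦ ?_
  have hUnp : UnpPt A x :=
    unpPt_of_infEDist_lt_setReach (by rwa [mem_closure_iff_infEDist_zero.1 hx])
  obtain ⟨p, ⟨hpA, hp⟩, -⟩ := hUnp
  rw [infDist_zero_of_mem_closure hx, dist_eq_zero] at hp
  rwa [hp]

theorem tendsto_of_tendsto_dist_infDist [ProperSpace X] {ι : Type*} {l : Filter ι} {q : ι → X}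
    {p y : X} (hA : IsClosed A) (hy : UnpPt A y) (hp : p ∈ A) (hyp : dist y p = infDist y A)
    (hq : ∀ i, q i ∈ A) (hyq : Tendsto (fun i ↦ dist y (q i)) l (𝓝 (infDist y A))) :
    Tendsto q l (𝓝 p) := by
  have hcomp : ∀ᶠ i in l, q i ∈ closedBall y (infDist y A + 1) := by
    filter_upwards [hyq.eventually_le_const (lt_add_one _)] with i hi
    rwa [mem_closedBall']
  refine (isCompact_closedBall y _).tendsto_nhds_of_unique_mapClusterPt hcomp fun q₀ _ hq₀ ↦ ?_
  have hq₀A : q₀ ∈ A := hA.mem_of_mapClusterPt hq₀ (.of_forall hq)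
  have hdist : MapClusterPt (dist y q₀) l fun i ↦ dist y (q i) :=
    hq₀.continuousAt_comp (f := dist y) (by fun_prop)
  have hlim : dist y q₀ = infDist y A :=
    eq_of_nhds_neBot (hdist.neBot.mono (inf_le_inf_left _ hyq))
  exact hy.unique ⟨hq₀A, hlim⟩ ⟨hp, hyp⟩

theorem tendsto_of_dist_eq_infDist [ProperSpace X] {ι : Type*} {l : Filter ι} {z q : ι → X}
    {p y : X} (hA : IsClosed A) (hy : UnpPt A y) (hp : p ∈ A) (hyp : dist y p = infDist y A)
    (hz : Tendsto z l (𝓝 y)) (hqA : ∀ i, q i ∈ A)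
    (hq : ∀ i, dist (z i) (q i) = infDist (z i) A) : Tendsto q l (𝓝 p) := by
  refine tendsto_of_tendsto_dist_infDist hA hy hp hyp hqA ?_
  have hcont : Continuous fun x ↦ dist y x + infDist x A := by fun_prop
  refine tendsto_of_tendsto_of_tendsto_of_le_of_le tendsto_const_nhds
    ((hcont.tendsto' y _ (by rw [dist_self, zero_add])).comp hz)
    (fun i ↦ infDist_le_dist_of_mem (hqA i)) fun i ↦ ?_
  calc dist y (q i) ≤ dist y (z i) + dist (z i) (q i) := dist_triangle ..
    _ = dist y (z i) + infDist (z i) A := by rw [hq]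

end Reach

section NearestPoint

variable {A : Set E}

theorem inner_div_norm_le_norm_add_sub_norm (u v : E) : ⟪u, v⟫ / ‖u‖ ≤ ‖u + v‖ - ‖u‖ := by
  rcases eq_or_ne u 0 with rfl | hu
  · simp
  have hu' : 0 < ‖u‖ := norm_pos_iff.2 hu
  rw [div_le_iff₀ hu']
  calc ⟪u, v⟫ = ⟪u, u + v⟫ - ‖u‖ * ‖u‖ := by
        rw [inner_add_right, real_inner_self_eq_norm_mul_norm]; ring
    _ ≤ ‖u‖ * ‖u + v‖ - ‖u‖ * ‖u‖ := by gcongr; exact real_inner_le_norm u (u + v)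
    _ = (‖u + v‖ - ‖u‖) * ‖u‖ := by ring

variable [FiniteDimensional ℝ E]

/- Moving from `y` away from its nearest point `p`, the distance to `A` grows at unit rate: the
nearest points `q` of the moved points tend to `p`, so `(y - q) / ‖y - q‖` tends to the direction
of motion. -/
theorem frequently_mul_dist_lt_infDist_sub {y : E} {α : ℝ} (hA : IsClosed A) (hy : UnpPt A y)
    (hpos : 0 < infDist y A) (hα : α < 1) :
    ∃ᶠ z in 𝓝 y, α * dist z y < infDist z A - infDist y A := by
  obtain ⟨p, ⟨hpA, hp⟩, -⟩ := id hy
  set z : ℝ → E := fun t ↦ y + t • (y - p) with hz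
  have hzy : Tendsto z (𝓝[>] 0) (𝓝 y) :=
    (Continuous.tendsto' (by fun_prop) 0 y (by simp [hz])).mono_left nhdsWithin_le_nhds
  choose q hqA hq using fun t ↦ hA.exists_infDist_eq_dist ⟨p, hpA⟩ (z t)
  have hqp : Tendsto q (𝓝[>] 0) (𝓝 p) :=
    tendsto_of_dist_eq_infDist hA hy hpA hp hzy hqA fun t ↦ (hq t).symm
  have hyp : 0 < ‖y - p‖ := by rwa [← dist_eq_norm, hp]
  have hrate : Tendsto (fun t ↦ ⟪y - q t, y - p⟫ / ‖y - q t‖) (𝓝[>] 0) (𝓝 ‖y - p‖) := by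
    have hsub : Tendsto (fun t ↦ y - q t) (𝓝[>] 0) (𝓝 (y - p)) := hqp.const_sub y
    have hquot : Tendsto (fun t ↦ ⟪y - q t, y - p⟫ / ‖y - q t‖) (𝓝[>] 0)
        (𝓝 (⟪y - p, y - p⟫ / ‖y - p‖)) :=
      (hsub.inner tendsto_const_nhds).div hsub.norm hyp.ne'
    rwa [real_inner_self_eq_norm_mul_norm, mul_self_div_self] at hquot
  refine hzy.frequently (Eventually.frequently ?_)
  filter_upwards [self_mem_nhdsWithin,
    hrate.eventually_const_lt (mul_lt_of_lt_one_left hyp hα)] with t (ht : 0 < t) hrate_t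
  calc α * dist (z t) y = t * (α * ‖y - p‖) := by
        rw [dist_eq_norm, hz, add_sub_cancel_left, norm_smul, Real.norm_of_nonneg ht.le]; ring
    _ < t * (⟪y - q t, y - p⟫ / ‖y - q t‖) := by gcongr
    _ = ⟪y - q t, t • (y - p)⟫ / ‖y - q t‖ := by rw [real_inner_smul_right]; ring
    _ ≤ ‖y - q t + t • (y - p)‖ - ‖y - q t‖ := inner_div_norm_le_norm_add_sub_norm _ _
    _ = infDist (z t) A - dist y (q t) := by
        rw [hq, dist_eq_norm, dist_eq_norm, hz, sub_add_eq_add_sub]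
    _ ≤ infDist (z t) A - infDist y A := by gcongr; exact infDist_le_dist_of_mem (hqA t)

/- Maximize `f - α * dist · x` over the closed ball: a maximum in the open ball would contradict
the growth of `f` there. -/
theorem exists_mem_sphere_add_mul_le {X : Type*} [PseudoMetricSpace X] [ProperSpace X]
    {f : X → ℝ} {x : X} {α σ : ℝ} (hf : Continuous f) (hα : 0 ≤ α) (hσ : 0 ≤ σ)
    (h : ∀ y ∈ ball x σ, f x ≤ f y → ∃ᶠ z in 𝓝 y, α * dist z y < f z - f y) :
    ∃ y ∈ sphere x σ, f x + α * σ ≤ f y := by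
  have hxmem : x ∈ closedBall x σ := mem_closedBall_self hσ
  obtain ⟨y, hy, hmax⟩ := (isCompact_closedBall x σ).exists_isMaxOn
    (f := fun y ↦ f y - α * dist y x) ⟨x, hxmem⟩ (by fun_prop)
  have hxy : f x + α * dist y x ≤ f y := by
    have := hmax hxmem
    simp only [mem_ofPred_eq, dist_self] at this
    linarith
  rcases (mem_closedBall.1 hy).lt_or_eq with hlt | heq
  · have hle : f x ≤ f y := by linarith [mul_nonneg hα (dist_nonneg (x := y) (y := x))]
    obtain ⟨z, hzy, hz⟩ := ((h y hlt hle).and_eventually (isOpen_ball.mem_nhds hlt)).exists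
    have hmaxz : f z - α * dist z x ≤ f y - α * dist y x := hmax (ball_subset_closedBall hz)
    have htri := mul_le_mul_of_nonneg_left (dist_triangle z y x) hα
    linarith
  · exact ⟨y, heq, heq ▸ hxy⟩

theorem exists_mem_sphere_le_infDist {x : E} {ρ : ℝ} (hA : ENNReal.ofReal ρ ≤ setReach A)
    (hne : A.Nonempty) (hpos : 0 < infDist x A) (hx : infDist x A < ρ) :
    ∃ y ∈ sphere x (ρ - infDist x A), ρ ≤ infDist y A := by
  have hclosed : IsClosed A :=
    isClosed_of_setReach_pos ((ENNReal.ofReal_pos.2 (hpos.trans hx)).trans_le hA)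
  set σ := ρ - infDist x A with hσ
  have hσpos : 0 < σ := sub_pos.2 hx
  have hgrow : ∀ α ∈ Ioo (0 : ℝ) 1, ∃ y ∈ sphere x σ, infDist x A + α * σ ≤ infDist y A := by
    intro α hα
    refine exists_mem_sphere_add_mul_le (continuous_infDist_pt A) hα.1.le hσpos.le
      fun y hy hxy ↦ ?_
    have hyρ : infDist y A < ρ := by
      linarith [infDist_le_infDist_add_dist (s := A) (x := y) (y := x), mem_ball.1 hy]
    exact frequently_mul_dist_lt_infDist_sub hclosed (unpPt_of_infDist_lt hA hne hyρ)
      (hpos.trans_le hxy) hα.2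
  obtain ⟨y₀, hy₀, -⟩ := hgrow (1 / 2) (by norm_num)
  obtain ⟨y, hy, hmax⟩ := (isCompact_sphere x σ).exists_isMaxOn ⟨y₀, hy₀⟩
    (continuous_infDist_pt A).continuousOn
  have hbound : ∀ᶠ α in 𝓝[<] (1 : ℝ), infDist x A + α * σ ≤ infDist y A := by
    filter_upwards [Ioo_mem_nhdsLT zero_lt_one] with α hα
    obtain ⟨z, hz, hzα⟩ := hgrow α hα
    exact hzα.trans (hmax hz)
  have hlim : Tendsto (fun α ↦ infDist x A + α * σ) (𝓝[<] 1) (𝓝 ρ) :=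
    (Continuous.tendsto' (by fun_prop) 1 ρ (by rw [hσ]; ring)).mono_left nhdsWithin_le_nhds
  exact ⟨y, hy, le_of_tendsto hlim hbound⟩

/- The point at distance `ρ - dist x p` from `x` and `ρ` from `A` given by
`exists_mem_sphere_le_infDist` lies on the ray from `p` through `x`, by strict convexity. -/
theorem le_infDist_add_smul {x p : E} {ρ : ℝ} (hA : ENNReal.ofReal ρ ≤ setReach A)
    (hp : p ∈ A) (hxp : dist x p = infDist x A) (hpos : 0 < dist x p) (hx : dist x p < ρ) :
    ρ ≤ infDist (p + (ρ / ‖x - p‖) • (x - p)) A := by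
  obtain ⟨y, hyx, hy⟩ := exists_mem_sphere_le_infDist hA ⟨p, hp⟩ (hxp ▸ hpos) (hxp ▸ hx)
  rw [← hxp, mem_sphere, dist_eq_norm, dist_eq_norm] at hyx
  rw [dist_eq_norm] at hpos
  have hray : SameRay ℝ (y - x) (x - p) := by
    refine sameRay_iff_norm_add.2 (le_antisymm (norm_add_le _ _) ?_)
    have hyp : infDist y A ≤ ‖y - p‖ := dist_eq_norm y p ▸ infDist_le_dist_of_mem hp
    rw [sub_add_sub_cancel]
    linarith
  have hdir : ‖x - p‖ • (y - x) = (ρ - ‖x - p‖) • (x - p) := by rw [← hray.norm_smul_eq, hyx]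
  have hy_eq : p + (ρ / ‖x - p‖) • (x - p) = y := by
    have hyp : ‖x - p‖ • (y - p) = ρ • (x - p) := by
      rw [← sub_add_sub_cancel y x p, smul_add, hdir, ← add_smul, sub_add_cancel]
    rw [div_eq_inv_mul, mul_smul, ← hyp, inv_smul_smul₀ hpos.ne', add_sub_cancel]
  rwa [hy_eq]

theorem two_mul_inner_le_of_dist_eq_infDist {x p b : E} {ρ : ℝ}
    (hA : ENNReal.ofReal ρ ≤ setReach A) (hp : p ∈ A) (hxp : dist x p = infDist x A)
    (hx : dist x p < ρ) (hb : b ∈ A) :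
    2 * ρ * ⟪x - p, b - p⟫ ≤ ‖x - p‖ * ‖b - p‖ ^ 2 := by
  rcases eq_or_ne x p with rfl | hne
  · simp
  have hpos : 0 < ‖x - p‖ := norm_pos_iff.2 (sub_ne_zero.2 hne)
  have hρ : 0 < ρ := dist_nonneg.trans_lt hx
  set u := (ρ / ‖x - p‖) • (x - p) with hu
  have hu_norm : ‖u‖ = ρ := by
    rw [hu, norm_smul, Real.norm_of_nonneg (by positivity), div_mul_cancel₀ _ hpos.ne']
  have hball : ρ ≤ ‖u - (b - p)‖ := by
    calc ρ ≤ infDist (p + u) A := le_infDist_add_smul hA hp hxp (dist_pos.2 hne) hx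
      _ ≤ dist (p + u) b := infDist_le_dist_of_mem hb
      _ = ‖u - (b - p)‖ := by rw [dist_eq_norm]; congr 1; abel
  have hinner : 2 * ⟪u, b - p⟫ ≤ ‖b - p‖ ^ 2 := by
    have hsq := pow_le_pow_left₀ hρ.le hball 2
    rw [norm_sub_sq_real, hu_norm] at hsq
    linarith
  calc 2 * ρ * ⟪x - p, b - p⟫ = ‖x - p‖ * (2 * ⟪u, b - p⟫) := by
        rw [hu, real_inner_smul_left]; field_simp
    _ ≤ ‖x - p‖ * ‖b - p‖ ^ 2 := by gcongr

end NearestPoint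

section NormalCone

variable {A : Set E} {a b u : E} {ρ : ℝ}

theorem mem_Nor_of_forall_eventually_inner_le
    (h : ∀ ε > 0, ∀ᶠ b in 𝓝[A] a, ⟪u, b - a⟫ ≤ ε * ‖b - a‖) : u ∈ Nor A a := by
  rintro v (rfl | ⟨x, r, hx, hxa, hv⟩)
  · rw [inner_zero_right]
  have hxA : Tendsto x atTop (𝓝[A] a) :=
    tendsto_nhdsWithin_iff.2 ⟨hxa, .of_forall fun n ↦ (hx n).1⟩
  have hle : ∀ ε > 0, ⟪u, v⟫ ≤ ε * ‖v‖ := by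
    intro ε hε
    refine le_of_tendsto_of_tendsto (tendsto_const_nhds.inner hv) (hv.norm.const_mul ε) ?_
    filter_upwards [hxA.eventually (h ε hε)] with n hn
    calc ⟪u, r n • (x n - a)⟫ = r n * ⟪u, x n - a⟫ := real_inner_smul_right ..
      _ ≤ r n * (ε * ‖x n - a‖) := mul_le_mul_of_nonneg_left hn (hx n).2.2.le
      _ = ε * ‖r n • (x n - a)‖ := by
        rw [norm_smul, Real.norm_of_nonneg (hx n).2.2.le]; ring
  have hlim : Tendsto (fun ε : ℝ ↦ ε * ‖v‖) (𝓝[>] 0) (𝓝 0) :=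
    (Continuous.tendsto' (by fun_prop) 0 0 (zero_mul ‖v‖)).mono_left nhdsWithin_le_nhds
  exact ge_of_tendsto hlim (eventually_mem_nhdsWithin.mono hle)

theorem norm_sq_le_two_mul_inner_of_norm_sub_le {v q : E} (h : ‖v - q‖ ≤ ‖v‖) :
    ‖q‖ ^ 2 ≤ 2 * ⟪v, q⟫ := by
  have hsq := pow_le_pow_left₀ (norm_nonneg _) h 2
  rw [norm_sub_sq_real] at hsq
  linarith

variable [FiniteDimensional ℝ E]

theorem eventually_inner_le_of_mem_Nor (hu : u ∈ Nor A a) {ε : ℝ} (hε : 0 < ε) :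
    ∀ᶠ b in 𝓝[A] a, ⟪u, b - a⟫ ≤ ε * ‖b - a‖ := by
  by_contra hfreq
  rw [not_eventually] at hfreq
  obtain ⟨x, hxa, hx⟩ :=
    exists_seq_forall_of_frequently (hfreq.and_eventually self_mem_nhdsWithin)
  have hne : ∀ n, x n - a ≠ 0 := fun n h0 ↦ (hx n).1 (by simp [h0])
  have hunit : ∀ n, ‖x n - a‖⁻¹ • (x n - a) ∈ sphere (0 : E) 1 := fun n ↦ by
    rw [mem_sphere_zero_iff_norm, norm_smul, norm_inv, norm_norm,
      inv_mul_cancel₀ (norm_ne_zero_iff.2 (hne n))]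
  obtain ⟨v, -, ψ, hψ, hv⟩ := (isCompact_sphere (0 : E) 1).tendsto_subseq hunit
  have hvTan : v ∈ Tan A a :=
    .inr ⟨x ∘ ψ, fun n ↦ ‖x (ψ n) - a‖⁻¹,
      fun n ↦ ⟨(hx (ψ n)).2, sub_ne_zero.1 (hne _), inv_pos.2 (norm_pos_iff.2 (hne _))⟩,
      (hxa.mono_right nhdsWithin_le_nhds).comp hψ.tendsto_atTop, hv⟩
  have hlarge : ε ≤ ⟪u, v⟫ := by
    refine ge_of_tendsto' (tendsto_const_nhds.inner hv) fun n ↦ ?_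
    have hpos : 0 < ‖x (ψ n) - a‖ := norm_pos_iff.2 (hne _)
    rw [Function.comp_apply, real_inner_smul_right, le_inv_mul_iff₀ hpos, mul_comm]
    exact (not_le.1 (hx (ψ n)).1).le
  exact (hε.trans_le hlarge).not_ge (hu v hvTan)

theorem isLittleO_nearest_sub {p : ℝ → E} (ha : a ∈ A) (hu : u ∈ Nor A a) (hpA : ∀ t, p t ∈ A)
    (hp : ∀ t, dist (a + t • u) (p t) = infDist (a + t • u) A) :
    (fun t ↦ p t - a) =o[𝓝[>] 0] fun t ↦ t := by
  have hnear : ∀ t, ‖t • u - (p t - a)‖ ≤ ‖t • u‖ := fun t ↦ by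
    calc ‖t • u - (p t - a)‖ = dist (a + t • u) (p t) := by
          rw [dist_eq_norm]; congr 1; abel
      _ ≤ dist (a + t • u) a := hp t ▸ infDist_le_dist_of_mem ha
      _ = ‖t • u‖ := by rw [dist_eq_norm, add_sub_cancel_left]
  have hpa : Tendsto p (𝓝[>] 0) (𝓝[A] a) := by
    refine tendsto_nhdsWithin_iff.2 ⟨tendsto_iff_norm_sub_tendsto_zero.2 ?_, .of_forall hpA⟩
    have hlim : Tendsto (fun t : ℝ ↦ 2 * ‖t • u‖) (𝓝[>] 0) (𝓝 0) :=
      (Continuous.tendsto' (by fun_prop) 0 0 (by simp)).mono_left nhdsWithin_le_nhds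
    refine squeeze_zero (fun _ ↦ norm_nonneg _) (fun t ↦ ?_) hlim
    linarith [norm_le_norm_add_norm_sub (t • u) (p t - a), hnear t]
  refine Asymptotics.isLittleO_iff.2 fun c hc ↦ ?_
  filter_upwards [self_mem_nhdsWithin,
    hpa.eventually (eventually_inner_le_of_mem_Nor hu (half_pos hc))] with t (ht : 0 < t) hinner
  have hsq : ‖p t - a‖ * ‖p t - a‖ ≤ c * t * ‖p t - a‖ := by
    calc ‖p t - a‖ * ‖p t - a‖ ≤ 2 * ⟪t • u, p t - a⟫ :=
          sq ‖p t - a‖ ▸ norm_sq_le_two_mul_inner_of_norm_sub_le (hnear t)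
      _ = 2 * t * ⟪u, p t - a⟫ := by rw [real_inner_smul_left]; ring
      _ ≤ 2 * t * (c / 2 * ‖p t - a‖) := by gcongr
      _ = c * t * ‖p t - a‖ := by ring
  rw [Real.norm_of_nonneg ht.le]
  rcases (norm_nonneg (p t - a)).eq_or_lt with h0 | hpos
  · rw [← h0]; positivity
  · exact le_of_mul_le_mul_right hsq hpos

/- Federer, *Curvature measures*, Theorem 4.8: the estimate at the nearest points `p t` of
`a + t • u`, divided by `t`, in the limit `t → 0`. -/
theorem two_mul_inner_le_of_mem_Nor (hρ : 0 < ρ) (hA : ENNReal.ofReal ρ ≤ setReach A)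
    (ha : a ∈ A) (hu : u ∈ Nor A a) (hb : b ∈ A) :
    2 * ρ * ⟪u, b - a⟫ ≤ ‖u‖ * ‖b - a‖ ^ 2 := by
  have hclosed : IsClosed A := isClosed_of_setReach_pos ((ENNReal.ofReal_pos.2 hρ).trans_le hA)
  choose p hpA hp using fun t : ℝ ↦ hclosed.exists_infDist_eq_dist ⟨a, ha⟩ (a + t • u)
  have hlittleO := isLittleO_nearest_sub ha hu hpA fun t ↦ (hp t).symm
  have hid : Tendsto (fun t : ℝ ↦ t) (𝓝[>] 0) (𝓝 0) := nhdsWithin_le_nhds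
  have hpa : Tendsto p (𝓝[>] 0) (𝓝 a) :=
    tendsto_sub_nhds_zero_iff.1 (hlittleO.isBigO.trans_tendsto hid)
  have hx : Tendsto (fun t : ℝ ↦ a + t • u) (𝓝[>] 0) (𝓝 a) :=
    (Continuous.tendsto' (by fun_prop) 0 a (by simp)).mono_left nhdsWithin_le_nhds
  have hdir : Tendsto (fun t ↦ t⁻¹ • (a + t • u - p t)) (𝓝[>] 0) (𝓝 u) := by
    have hsub := hlittleO.tendsto_inv_smul_nhds_zero.const_sub u
    rw [sub_zero] at hsub
    refine hsub.congr' ?_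
    filter_upwards [self_mem_nhdsWithin] with t (ht : 0 < t)
    rw [← inv_smul_smul₀ ht.ne' u, ← smul_sub, inv_smul_smul₀ ht.ne']
    congr 1
    abel
  have hbp : Tendsto (fun t ↦ b - p t) (𝓝[>] 0) (𝓝 (b - a)) := hpa.const_sub b
  have hclose : ∀ᶠ t in 𝓝[>] (0 : ℝ), dist (a + t • u) (p t) < ρ :=
    (hx.dist hpa).eventually_lt_const (by rwa [dist_self])
  refine le_of_tendsto_of_tendsto ((hdir.inner hbp).const_mul (2 * ρ))
    (hdir.norm.mul (hbp.norm.pow 2)) ?_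
  filter_upwards [self_mem_nhdsWithin, hclose] with t (ht : 0 < t) htρ
  calc 2 * ρ * ⟪t⁻¹ • (a + t • u - p t), b - p t⟫
      = t⁻¹ * (2 * ρ * ⟪a + t • u - p t, b - p t⟫) := by rw [real_inner_smul_left]; ring
    _ ≤ t⁻¹ * (‖a + t • u - p t‖ * ‖b - p t‖ ^ 2) := by
      refine mul_le_mul_of_nonneg_left ?_ (inv_nonneg.2 ht.le)
      exact two_mul_inner_le_of_dist_eq_infDist hA (hpA t) (hp t).symm htρ hb
    _ = ‖t⁻¹ • (a + t • u - p t)‖ * ‖b - p t‖ ^ 2 := by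
      rw [norm_smul, norm_inv, Real.norm_of_nonneg ht.le]; ring

end NormalCone

section OrthogonalGraph

variable {W : Submodule ℝ E}

/-- The graph `{w + φ w | w ∈ U}` in `E = W ⊕ Wᗮ` of a map `φ` from `W` to `Wᗮ` over `U`. -/
def orthGraph (φ : W → Wᗮ) (U : Set W) : Set E :=
  {x | ∃ w ∈ U, x = (w : E) + (φ w : E)}

theorem inner_coe_add_coe_orthogonal (s s' : W) (v v' : Wᗮ) :
    ⟪(s : E) + v, (s' : E) + v'⟫ = ⟪s, s'⟫ + ⟪v, v'⟫ := by
  rw [inner_add_left, inner_add_right, inner_add_right,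
    W.inner_right_of_mem_orthogonal s.2 v'.2, W.inner_left_of_mem_orthogonal s'.2 v.2,
    add_zero, zero_add, W.coe_inner, Wᗮ.coe_inner]

theorem norm_le_norm_coe_add_coe_orthogonal (s : W) (v : Wᗮ) : ‖s‖ ≤ ‖(s : E) + v‖ := by
  refine le_of_sq_le_sq ?_ (norm_nonneg _)
  rw [← real_inner_self_eq_norm_sq, ← real_inner_self_eq_norm_sq, inner_coe_add_coe_orthogonal]
  exact le_add_of_nonneg_right real_inner_self_nonneg

theorem orthGraph_sub_orthGraph (φ : W → Wᗮ) (v w : W) :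
    ((v : E) + φ v) - ((w : E) + φ w) = ((v - w : W) : E) + ((φ v - φ w : Wᗮ) : E) := by
  push_cast
  abel

theorem norm_orthGraph_sub_le {φ : W → Wᗮ} {U : Set W} {K : ℝ≥0} (hφ : LipschitzOnWith K φ U)
    {v w : W} (hv : v ∈ U) (hw : w ∈ U) :
    ‖((v : E) + φ v) - ((w : E) + φ w)‖ ≤ (1 + K) * ‖v - w‖ := by
  rw [orthGraph_sub_orthGraph]
  calc ‖((v - w : W) : E) + ((φ v - φ w : Wᗮ) : E)‖ ≤ ‖v - w‖ + ‖φ v - φ w‖ := norm_add_le _ _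
    _ ≤ ‖v - w‖ + K * ‖v - w‖ := by gcongr; exact hφ.norm_sub_le hv hw
    _ = (1 + K) * ‖v - w‖ := by ring

variable [CompleteSpace E] [CompleteSpace W]

/-- The vector `e - L† e`: the vectors of this form are those orthogonal to the graph of `L`. -/
def graphNormal (L : W →L[ℝ] Wᗮ) (e : Wᗮ) : E :=
  ((-L.adjoint e : W) : E) + (e : E)

theorem inner_graphNormal (L : W →L[ℝ] Wᗮ) (e v : Wᗮ) (s : W) :
    ⟪graphNormal L e, (s : E) + v⟫ = ⟪e, v - L s⟫ := by
  rw [graphNormal, inner_coe_add_coe_orthogonal, inner_neg_left,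
    ContinuousLinearMap.adjoint_inner_left, inner_sub_right]
  ring

theorem norm_graphNormal_le (L : W →L[ℝ] Wᗮ) (e : Wᗮ) :
    ‖graphNormal L e‖ ≤ (1 + ‖L‖) * ‖e‖ := by
  calc ‖graphNormal L e‖ ≤ ‖-L.adjoint e‖ + ‖e‖ := norm_add_le _ _
    _ ≤ ‖L‖ * ‖e‖ + ‖e‖ := by
      rw [norm_neg, ← ContinuousLinearMap.adjoint.norm_map L]
      gcongr
      exact L.adjoint.le_opNorm e
    _ = (1 + ‖L‖) * ‖e‖ := by ring

theorem graphNormal_mem_Nor {A : Set E} {U : Set W} {φ : W → Wᗮ} {L : W →L[ℝ] Wᗮ} {w : W}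
    (hG : orthGraph φ U ∈ 𝓝[A] ((w : E) + φ w)) (hL : HasFDerivAt φ L w) (e : Wᗮ) :
    graphNormal L e ∈ Nor A ((w : E) + φ w) := by
  refine mem_Nor_of_forall_eventually_inner_le fun ε hε ↦ ?_
  have hpos : 0 < ‖e‖ + 1 := by positivity
  obtain ⟨δ, hδ, hφδ⟩ := Metric.eventually_nhds_iff.1
    (Asymptotics.isLittleO_iff.1 hL.isLittleO (div_pos hε hpos))
  filter_upwards [hG, mem_nhdsWithin_of_mem_nhds (ball_mem_nhds _ hδ)]
  rintro _ ⟨v, -, rfl⟩ hvδ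
  rw [mem_ball, dist_eq_norm] at hvδ
  have hvw : ‖v - w‖ ≤ ‖((v : E) + φ v) - ((w : E) + φ w)‖ := by
    rw [orthGraph_sub_orthGraph]
    exact norm_le_norm_coe_add_coe_orthogonal _ _
  have hsmall : ‖φ v - φ w - L (v - w)‖ ≤ ε / (‖e‖ + 1) * ‖v - w‖ :=
    hφδ (by rw [dist_eq_norm]; exact hvw.trans_lt hvδ)
  calc ⟪graphNormal L e, ((v : E) + φ v) - ((w : E) + φ w)⟫
      = ⟪e, φ v - φ w - L (v - w)⟫ := by rw [orthGraph_sub_orthGraph, inner_graphNormal]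
    _ ≤ ‖e‖ * ‖φ v - φ w - L (v - w)‖ := real_inner_le_norm _ _
    _ ≤ (‖e‖ + 1) * (ε / (‖e‖ + 1) * ‖v - w‖) := by
      gcongr; exact le_add_of_nonneg_right zero_le_one
    _ = ε * ‖v - w‖ := by rw [← mul_assoc, mul_div_cancel₀ _ hpos.ne']
    _ ≤ ε * ‖((v : E) + φ v) - ((w : E) + φ w)‖ := by gcongr

end OrthogonalGraph

/- Federer's estimate for the normal vector `graphNormal L e`, where `e` is the Taylor remainder
itself: the left-hand side is then `2 * ρ * ‖e‖ ^ 2`. -/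
theorem norm_taylor_remainder_le_of_le_setReach [FiniteDimensional ℝ E] {A : Set E}
    {W : Submodule ℝ E} {U : Set W} {φ : W → Wᗮ} {L : W →L[ℝ] Wᗮ} {w : W} {ρ : ℝ} {K : ℝ≥0}
    (hρ : 0 < ρ) (hA : ENNReal.ofReal ρ ≤ setReach A) (hGA : orthGraph φ U ⊆ A)
    (hφ : LipschitzOnWith K φ U) (hU : U ∈ 𝓝 w) (hG : orthGraph φ U ∈ 𝓝[A] ((w : E) + φ w))
    (hL : HasFDerivAt φ L w) {w' : W} (hw' : w' ∈ U) :
    ‖φ w' - φ w - L (w' - w)‖ ≤ (1 + K) ^ 3 / (2 * ρ) * ‖w' - w‖ ^ 2 := by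
  have hw : w ∈ U := mem_of_mem_nhds hU
  set e : Wᗮ := φ w' - φ w - L (w' - w) with he
  rcases eq_or_ne e 0 with h0 | hne
  · rw [h0, norm_zero]
    positivity
  have hnormal : ‖graphNormal L e‖ ≤ (1 + K) * ‖e‖ := by
    refine (norm_graphNormal_le L e).trans ?_
    gcongr
    exact hL.le_of_lipschitzOn hU hφ
  have hmul : 2 * ρ * ‖e‖ * ‖e‖ ≤ (1 + K) ^ 3 * ‖w' - w‖ ^ 2 * ‖e‖ := by
    calc 2 * ρ * ‖e‖ * ‖e‖
        = 2 * ρ * ⟪graphNormal L e, ((w' : E) + φ w') - ((w : E) + φ w)⟫ := by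
          rw [orthGraph_sub_orthGraph, inner_graphNormal, ← he,
            real_inner_self_eq_norm_mul_norm]
          ring
      _ ≤ ‖graphNormal L e‖ * ‖((w' : E) + φ w') - ((w : E) + φ w)‖ ^ 2 :=
          two_mul_inner_le_of_mem_Nor hρ hA (hGA ⟨w, hw, rfl⟩) (graphNormal_mem_Nor hG hL e)
            (hGA ⟨w', hw', rfl⟩)
      _ ≤ (1 + K) * ‖e‖ * ((1 + K) * ‖w' - w‖) ^ 2 := by
          gcongr
          exact norm_orthGraph_sub_le hφ hw' hw
      _ = (1 + K) ^ 3 * ‖w' - w‖ ^ 2 * ‖e‖ := by ring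
  rw [div_mul_eq_mul_div, le_div_iff₀' (by positivity)]
  exact le_of_mul_le_mul_right hmul (norm_pos_iff.2 hne)

section LocalBound

variable {X Y : Type*} [NormedAddCommGroup X] [NormedAddCommGroup Y] {f : X → Y}
  {U : Set X} {C : ℝ}

theorem continuousWithinAt_of_eventually_norm_sub_le {w : X}
    (hf : ∀ᶠ z in 𝓝[U] w, ‖f z - f w‖ ≤ C * ‖z - w‖) : ContinuousWithinAt f U w := by
  have hid : Tendsto (fun z ↦ z - w) (𝓝[U] w) (𝓝 0) :=
    tendsto_sub_nhds_zero_iff.2 (tendsto_id.mono_left nhdsWithin_le_nhds)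
  exact tendsto_sub_nhds_zero_iff.1 ((Asymptotics.IsBigO.of_bound C hf).trans_tendsto hid)

theorem norm_sub_le_of_eventually_norm_sub_le_Icc {f : ℝ → Y}
    (hf : ∀ t ∈ Icc (0 : ℝ) 1, ∀ᶠ s in 𝓝[Icc 0 1] t, ‖f s - f t‖ ≤ C * ‖s - t‖) :
    ‖f 1 - f 0‖ ≤ C := by
  have hcont : ContinuousOn (fun t ↦ ‖f t - f 0‖) (Icc 0 1) := by
    have hf' : ContinuousOn f (Icc 0 1) := fun t ht ↦
      continuousWithinAt_of_eventually_norm_sub_le (hf t ht)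
    fun_prop
  have hslope : ∀ t ∈ Ico (0 : ℝ) 1, ∀ r, C < r →
      ∃ᶠ s in 𝓝[>] t, slope (fun t ↦ ‖f t - f 0‖) t s < r := by
    intro t ht r hr
    have hft : ∀ᶠ s in 𝓝[>] t, ‖f s - f t‖ ≤ C * ‖s - t‖ :=
      nhdsWithin_le_of_mem (Icc_mem_nhdsGT_of_mem ht) (hf t (Ico_subset_Icc_self ht))
    refine Eventually.frequently ?_
    filter_upwards [self_mem_nhdsWithin, hft] with s (hs : t < s) hfs
    refine lt_of_le_of_lt ?_ hr
    rw [slope_def_field, div_le_iff₀ (sub_pos.2 hs)]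
    calc ‖f s - f 0‖ - ‖f t - f 0‖ ≤ ‖(f s - f 0) - (f t - f 0)‖ := norm_sub_norm_le _ _
      _ = ‖f s - f t‖ := by rw [sub_sub_sub_cancel_right]
      _ ≤ C * (s - t) := by rwa [Real.norm_of_nonneg (sub_pos.2 hs).le] at hfs
  have hle := image_le_of_liminf_slope_right_le_deriv_boundary (B := fun t ↦ C * t)
    (B' := fun _ ↦ C) hcont (by simp) (by fun_prop)
    (fun t _ ↦ by simpa using ((hasDerivAt_id t).const_mul C).hasDerivWithinAt) hslope
    (right_mem_Icc.2 zero_le_one)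
  rwa [mul_one] at hle

theorem norm_sub_le_of_convex_of_eventually_norm_sub_le [NormedSpace ℝ X] {x y : X}
    (hU : Convex ℝ U) (hf : ∀ w ∈ U, ∀ᶠ z in 𝓝[U] w, ‖f z - f w‖ ≤ C * ‖z - w‖)
    (hx : x ∈ U) (hy : y ∈ U) : ‖f y - f x‖ ≤ C * ‖y - x‖ := by
  set γ : ℝ →ᵃ[ℝ] X := AffineMap.lineMap x y with hγ
  have hγU : MapsTo γ (Icc 0 1) U := fun t ht ↦ hU.lineMap_mem hx hy ht
  have hγcont : Continuous γ := AffineMap.lineMap_continuous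
  have hloc : ∀ t ∈ Icc (0 : ℝ) 1,
      ∀ᶠ s in 𝓝[Icc 0 1] t, ‖f (γ s) - f (γ t)‖ ≤ C * ‖y - x‖ * ‖s - t‖ := by
    intro t ht
    have htend : Tendsto γ (𝓝[Icc 0 1] t) (𝓝[U] γ t) :=
      hγcont.continuousWithinAt.tendsto_nhdsWithin hγU
    filter_upwards [htend.eventually (hf _ (hγU ht))] with s hs
    rwa [← dist_eq_norm (γ s), dist_lineMap_lineMap, dist_comm x, dist_eq_norm, dist_eq_norm,
      mul_comm ‖s - t‖, ← mul_assoc] at hs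
  simpa [hγ] using norm_sub_le_of_eventually_norm_sub_le_Icc hloc

end LocalBound

section QuadraticApproximation

variable {X Y : Type*} [NormedAddCommGroup X] [NormedSpace ℝ X] [NormedAddCommGroup Y]
  [NormedSpace ℝ Y] {φ : X → Y} {L L' : X →L[ℝ] Y} {U : Set X} {w w' : X} {M : ℝ}

theorem hasFDerivAt_of_norm_taylor_remainder_le_sq (hU : U ∈ 𝓝 w)
    (h : ∀ z ∈ U, ‖φ z - φ w - L (z - w)‖ ≤ M * ‖z - w‖ ^ 2) : HasFDerivAt φ L w := by
  have hbigO : (fun z ↦ φ z - φ w - L (z - w)) =O[𝓝 w] fun z ↦ ‖z - w‖ ^ 2 := by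
    refine .of_bound M ?_
    filter_upwards [hU] with z hz
    rw [norm_pow, norm_norm]
    exact h z hz
  exact .of_isLittleO (hbigO.trans_isLittleO (Asymptotics.isLittleO_pow_sub_sub w one_lt_two))

theorem norm_taylor_remainder_le_of_tendsto {ι : Type*} {l : Filter ι} [l.NeBot] {x : ι → X}
    {T : ι → X →L[ℝ] Y} {z : X} (hφ : ContinuousAt φ w) (hx : Tendsto x l (𝓝 w))
    (hT : Tendsto T l (𝓝 L))
    (h : ∀ i, ‖φ z - φ (x i) - T i (z - x i)‖ ≤ M * ‖z - x i‖ ^ 2) :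
    ‖φ z - φ w - L (z - w)‖ ≤ M * ‖z - w‖ ^ 2 := by
  have hzx : Tendsto (fun i ↦ z - x i) l (𝓝 (z - w)) := hx.const_sub z
  have hTzx : Tendsto (fun i ↦ T i (z - x i)) l (𝓝 (L (z - w))) :=
    (isBoundedBilinearMap_apply.continuous.tendsto (L, z - w)).comp (hT.prodMk_nhds hzx)
  exact le_of_tendsto_of_tendsto' (((hφ.tendsto.comp hx).const_sub (φ z)).sub hTzx).norm
    ((hzx.norm.pow 2).const_mul M) h

/- Compare the expansions at `w` and at `w'` in the points `w' + v` with `‖v‖ = ‖w' - w‖`. -/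
theorem norm_sub_le_of_norm_taylor_remainder_le_sq (hM : 0 ≤ M)
    (hw : ∀ z ∈ closedBall w' ‖w' - w‖, ‖φ z - φ w - L (z - w)‖ ≤ M * ‖z - w‖ ^ 2)
    (hw' : ∀ z ∈ closedBall w' ‖w' - w‖, ‖φ z - φ w' - L' (z - w')‖ ≤ M * ‖z - w'‖ ^ 2)
    (hne : w' ≠ w) : ‖L' - L‖ ≤ 6 * M * ‖w' - w‖ := by
  set δ := ‖w' - w‖
  have hδpos : 0 < δ := norm_pos_iff.2 (sub_ne_zero.2 hne)
  refine ContinuousLinearMap.opNorm_le_of_unit_norm (by positivity) fun v hv ↦ ?_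
  set z := w' + δ • v with hz
  have hzw' : ‖z - w'‖ = δ := by
    rw [hz, add_sub_cancel_left, norm_smul, hv, mul_one, Real.norm_of_nonneg hδpos.le]
  have hzw : ‖z - w‖ ≤ 2 * δ := by
    linarith [norm_sub_le_norm_sub_add_norm_sub z w' w]
  have hzmem : z ∈ closedBall w' δ := mem_closedBall_iff_norm.2 hzw'.le
  have hdecomp : δ • (L' - L) v = (φ z - φ w - L (z - w)) - (φ w' - φ w - L (w' - w))
      - (φ z - φ w' - L' (z - w')) := by
    have hv_eq : δ • v = z - w' := by rw [hz, add_sub_cancel_left]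
    rw [← map_smul, hv_eq, sub_apply, ← sub_add_sub_cancel z w' w, map_add]
    abel
  refine le_of_mul_le_mul_left ?_ hδpos
  calc δ * ‖(L' - L) v‖ = ‖δ • (L' - L) v‖ := by rw [norm_smul, Real.norm_of_nonneg hδpos.le]
    _ ≤ ‖φ z - φ w - L (z - w)‖ + ‖φ w' - φ w - L (w' - w)‖ + ‖φ z - φ w' - L' (z - w')‖ := by
      rw [hdecomp]
      exact norm_sub_le_of_le (norm_sub_le _ _) le_rfl
    _ ≤ M * (2 * δ) ^ 2 + M * δ ^ 2 + M * δ ^ 2 := by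
      gcongr
      · exact (hw z hzmem).trans (by gcongr)
      · exact hw w' (mem_closedBall_self hδpos.le)
      · exact hzw' ▸ hw' z hzmem
    _ = δ * (6 * M * δ) := by ring

theorem eventually_norm_sub_le_of_norm_taylor_remainder_le_sq {g : X → X →L[ℝ] Y} (hM : 0 ≤ M)
    (hU : U ∈ 𝓝 w)
    (h : ∀ w ∈ U, ∀ z ∈ U, ‖φ z - φ w - g w (z - w)‖ ≤ M * ‖z - w‖ ^ 2) :
    ∀ᶠ w' in 𝓝 w, ‖g w' - g w‖ ≤ 6 * M * ‖w' - w‖ := by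
  obtain ⟨ε, hε, hεU⟩ := Metric.mem_nhds_iff.1 hU
  filter_upwards [ball_mem_nhds w (half_pos hε)] with w' hw'
  rcases eq_or_ne w' w with rfl | hne
  · simp
  rw [mem_ball, dist_eq_norm] at hw'
  have hball : closedBall w' ‖w' - w‖ ⊆ U := by
    refine (closedBall_subset_ball' ?_).trans hεU
    rw [dist_eq_norm]
    linarith
  have hw'U : w' ∈ U := hball (mem_closedBall_self (norm_nonneg _))
  exact norm_sub_le_of_norm_taylor_remainder_le_sq hM
    (fun z hz ↦ h w (mem_of_mem_nhds hU) z (hball hz)) (fun z hz ↦ h w' hw'U z (hball hz)) hne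

variable [FiniteDimensional ℝ X] [FiniteDimensional ℝ Y] {K : ℝ≥0}

theorem subset_closure_inter_differentiableAt (hφ : LipschitzOnWith K φ U)
    (hU : IsOpen U) : U ⊆ closure (U ∩ {w | DifferentiableAt ℝ φ w}) := by
  borelize X
  have hae := (MeasureTheory.ae_restrict_iff' hU.measurableSet).1
    (hφ.ae_differentiableWithinAt (μ := MeasureTheory.Measure.addHaar) hU.measurableSet)
  intro w hw
  refine closure_mono ?_ ((MeasureTheory.Measure.dense_of_ae hae).open_subset_closure_inter hU hw)
  exact fun x hx ↦ ⟨hx.1, (hx.2 hx.1).differentiableAt (hU.mem_nhds hx.1)⟩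

theorem differentiableAt_of_norm_taylor_remainder_le_sq (hU : IsOpen U)
    (hφ : LipschitzOnWith K φ U)
    (h : ∀ w ∈ U, DifferentiableAt ℝ φ w →
      ∀ z ∈ U, ‖φ z - φ w - fderiv ℝ φ w (z - w)‖ ≤ M * ‖z - w‖ ^ 2)
    (hw : w ∈ U) : DifferentiableAt ℝ φ w := by
  obtain ⟨x, hx, hxw⟩ :=
    mem_closure_iff_seq_limit.1 (subset_closure_inter_differentiableAt hφ hU hw)
  have hbdd : ∀ n, fderiv ℝ φ (x n) ∈ closedBall 0 (K : ℝ) := fun n ↦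
    mem_closedBall_zero_iff.2 (norm_fderiv_le_of_lipschitzOn ℝ (hU.mem_nhds (hx n).1) hφ)
  obtain ⟨L, -, ψ, hψ, hL⟩ := tendsto_subseq_of_bounded isBounded_closedBall hbdd
  have hcont : ContinuousAt φ w := hφ.continuousOn.continuousAt (hU.mem_nhds hw)
  refine (hasFDerivAt_of_norm_taylor_remainder_le_sq (L := L) (M := M) (hU.mem_nhds hw)
    fun z hz ↦ ?_).differentiableAt
  exact norm_taylor_remainder_le_of_tendsto hcont (hxw.comp hψ.tendsto_atTop) hL
    fun n ↦ h _ (hx _).1 (hx _).2 z hz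

end QuadraticApproximation

theorem stmt13_general [FiniteDimensional ℝ E] {A O : Set E} {ρ : ℝ} {K : ℝ≥0}
    {W : Submodule ℝ E} {U : Set W} {φ : W → Wᗮ} (hρ : 0 < ρ) (hA : ENNReal.ofReal ρ ≤ setReach A)
    (hU : IsOpen U) (hUconv : Convex ℝ U) (hφ : LipschitzOnWith K φ U) (hO : IsOpen O)
    (hG : orthGraph φ U = A ∩ O) :
    (∀ w ∈ U, DifferentiableAt ℝ φ w) ∧ ∀ w ∈ U, ∀ w' ∈ U,
      ‖fderiv ℝ φ w - fderiv ℝ φ w'‖ ≤ 3 * (1 + K) ^ 3 / ρ * ‖w - w'‖ := by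
  have hGA : orthGraph φ U ⊆ A := hG ▸ inter_subset_left
  have hGnhds : ∀ w ∈ U, orthGraph φ U ∈ 𝓝[A] ((w : E) + φ w) := fun w hw ↦ by
    have hwG : (w : E) + φ w ∈ orthGraph φ U := ⟨w, hw, rfl⟩
    rw [hG] at hwG ⊢
    exact inter_mem_nhdsWithin A (hO.mem_nhds hwG.2)
  have htaylor : ∀ w ∈ U, DifferentiableAt ℝ φ w → ∀ z ∈ U,
      ‖φ z - φ w - fderiv ℝ φ w (z - w)‖ ≤ (1 + K) ^ 3 / (2 * ρ) * ‖z - w‖ ^ 2 :=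
    fun w hw hd _ ↦ norm_taylor_remainder_le_of_le_setReach hρ hA hGA hφ (hU.mem_nhds hw)
      (hGnhds w hw) hd.hasFDerivAt
  have hdiff : ∀ w ∈ U, DifferentiableAt ℝ φ w := fun w hw ↦
    differentiableAt_of_norm_taylor_remainder_le_sq hU hφ htaylor hw
  refine ⟨hdiff, fun w hw w' hw' ↦ ?_⟩
  have hconst : 6 * ((1 + (K : ℝ)) ^ 3 / (2 * ρ)) = 3 * (1 + K) ^ 3 / ρ := by field_simp; norm_num
  rw [← hconst]
  refine norm_sub_le_of_convex_of_eventually_norm_sub_le (f := fderiv ℝ φ) hUconv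
    (fun x hx ↦ ?_) hw' hw
  exact nhdsWithin_le_nhds <| eventually_norm_sub_le_of_norm_taylor_remainder_le_sq (by positivity)
    (hU.mem_nhds hx) fun v hv ↦ htaylor v hv (hdiff v hv)

/-- A Lipschitz graph which is relatively open in a set of reach > ρ is C^{1,1}, with
derivative Lipschitz of constant μ(2+K)³/ρ for an absolute constant μ. -/
theorem stmt13 : ∃ μ : ℝ, 0 < μ ∧
    ∀ (d k : ℕ) (A : Set (EuclideanSpace ℝ (Fin d))) (ρ K : ℝ)
      (W : Submodule ℝ (EuclideanSpace ℝ (Fin d))) (c : W) (r : ℝ)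
      (φ : W → (Wᗮ : Submodule ℝ (EuclideanSpace ℝ (Fin d)))),
      0 < ρ → ENNReal.ofReal ρ < setReach A →
      1 ≤ k → k ≤ d - 1 → Module.finrank ℝ W = k → 0 < K →
      LipschitzOnWith (Real.toNNReal K) φ (ball c r) →
      (∃ O : Set (EuclideanSpace ℝ (Fin d)), IsOpen O ∧
        {x : EuclideanSpace ℝ (Fin d) | ∃ w ∈ ball c r,
          x = (w : EuclideanSpace ℝ (Fin d)) + (φ w : EuclideanSpace ℝ (Fin d))}
          = A ∩ O) →
      ∃ g : W → (W →L[ℝ] (Wᗮ : Submodule ℝ (EuclideanSpace ℝ (Fin d)))),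
        (∀ w ∈ ball c r, HasFDerivAt φ (g w) w) ∧
        ∀ w ∈ ball c r, ∀ w' ∈ ball c r,
          ‖g w - g w'‖ ≤ μ * (2 + K) ^ 3 / ρ * ‖w - w'‖ := by
  refine ⟨3, by norm_num, fun d k A ρ K W c r φ hρ hA _ _ _ hK hφ ⟨O, hO, hG⟩ ↦ ?_⟩
  obtain ⟨hdiff, hlip⟩ :=
    stmt13_general hρ hA.le isOpen_ball (convex_ball c r) hφ hO hG
  refine ⟨fderiv ℝ φ, fun w hw ↦ (hdiff w hw).hasFDerivAt, fun w hw w' hw' ↦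
    (hlip w hw w' hw').trans ?_⟩
  rw [Real.coe_toNNReal K hK.le]
  gcongr
  norm_num
end
end
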